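/- arXiv:2408.05871 — 5 statements merged into one kernel-verified Lean document; each statement's English description precedes it below -/
import Mathlib

section
/- For all integers m ≥ k ≥ 2 there exists a function f : ℕ → ℕ such that every finite k-uniform hypergraph H with at least one edge that has property T_k(m) satisfies χ(H) ≤ f(ω(H)); that is, the class H_k(m) is χ-bounded. -/
open scoped Classical

universe u

section SetSystems

variable {X : Type*}

/-- A finite family of sets is intersecting if all of its members have a common element. -/
def IsIntersecting (F : Finset (Set X)) : Prop :=
  ∃ x, ∀ K ∈ F, x ∈ K

/-- A convexity space: `∅` and the whole space are convex, convexity is closed under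
arbitrary (nonempty) intersections and under unions of (nonempty) chains. -/
def IsConvexitySpace (C : Set (Set X)) : Prop :=
  ∅ ∈ C ∧ Set.univ ∈ C ∧
    (∀ D ⊆ C, D.Nonempty → ⋂₀ D ∈ C) ∧
    (∀ D ⊆ C, D.Nonempty → IsChain (· ⊆ ·) D → ⋃₀ D ∈ C)

/-- The convex hull of `Y`: intersection of all convex sets containing `Y`. -/
def convHull (C : Set (Set X)) (Y : Set X) : Set X :=
  ⋂₀ {K | K ∈ C ∧ Y ⊆ K}

/-- `Y` admits a Radon partition: a partition into two disjoint parts whose hulls meet. -/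
def HasRadonPartition (C : Set (Set X)) (Y : Finset X) : Prop :=
  ∃ A B : Finset X, (↑A ∪ ↑B : Set X) = ↑Y ∧ Disjoint (↑A : Set X) (↑B : Set X) ∧
    (convHull C ↑A ∩ convHull C ↑B).Nonempty

/-- The Radon number is at most `n`: every finite subset of size at least `n`
admits a Radon partition. -/
def RadonLE (C : Set (Set X)) (n : ℕ) : Prop :=
  ∀ Y : Finset X, n ≤ Y.card → HasRadonPartition C Y

/-- `Y` admits a Tverberg `k`-partition: a partition into `k` pairwise disjoint parts
whose hulls have a common point. -/
def HasTverbergPartition (C : Set (Set X)) (k : ℕ) (Y : Finset X) : Prop :=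
  ∃ P : Fin k → Finset X, (⋃ i, (↑(P i) : Set X)) = ↑Y ∧
    (∀ i j, i ≠ j → Disjoint (↑(P i) : Set X) (↑(P j) : Set X)) ∧
    (⋂ i, convHull C ↑(P i)).Nonempty

/-- A minimally non-intersecting family: not intersecting, but every proper subfamily
obtained by deleting one member is intersecting. -/
def MinNonIntersecting (F : Finset (Set X)) : Prop :=
  ¬ IsIntersecting F ∧ ∀ K ∈ F, IsIntersecting (F.erase K)

/-- The Helly number of the set system `S` is at most `n`. -/
def HellyLE (S : Set (Set X)) (n : ℕ) : Prop :=
  ∀ F : Finset (Set X), ↑F ⊆ S → MinNonIntersecting F → F.card ≤ n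

/-- The colorful Helly number of the set system `S` is at most `m`. -/
def ColorfulHellyLE (S : Set (Set X)) (m : ℕ) : Prop :=
  ∀ F : Fin m → Finset (Set X), (∀ i, ↑(F i) ⊆ S) →
    (∀ K : Fin m → Set X, (∀ i, K i ∈ F i) → (⋂ i, K i).Nonempty) →
    ∃ i, IsIntersecting (F i)

/-- `S` satisfies the fractional Helly property for `k`-tuples with function `β`. -/
def FracHelly (S : Set (Set X)) (k : ℕ) (β : ℝ → ℝ) : Prop :=
  ∀ α ∈ Set.Ioo (0 : ℝ) 1, ∀ F : Finset (Set X), ↑F ⊆ S →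
    α * (F.card.choose k : ℝ) ≤
      (((F.powersetCard k).filter (fun G => IsIntersecting G)).card : ℝ) →
    ∃ G ⊆ F, IsIntersecting G ∧ β α * (F.card : ℝ) ≤ (G.card : ℝ)

/-- The transversal number of the finite family `F` is at most `n`: `F` can be
partitioned into (at most) `n` intersecting subfamilies. -/
def TransversalLE (F : Finset (Set X)) (n : ℕ) : Prop :=
  ∃ P : Fin n → Finset (Set X), (∀ i, P i ⊆ F) ∧ (∀ K ∈ F, ∃! i, K ∈ P i) ∧
    ∀ i, (P i).Nonempty → IsIntersecting (P i)

/-- The fractional transversal number of `F` is at most `t`: there is a finitely supported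
fractional transversal of total weight at most `t`. -/
def FracTransversalLE (F : Finset (Set X)) (t : ℝ) : Prop :=
  ∃ f : X →₀ ℝ, (∀ x, 0 ≤ f x ∧ f x ≤ 1) ∧
    (∀ S ∈ F, 1 ≤ ∑ x ∈ f.support.filter (fun x => x ∈ S), f x) ∧
    (∑ x ∈ f.support, f x) ≤ t

/-- The weak ε-net property: there is a function `g` bounding the transversal number of
every finite subfamily in terms of its fractional transversal number. -/
def WeakEpsNetProp (S : Set (Set X)) : Prop :=
  ∃ g : ℝ → ℕ, ∀ F : Finset (Set X), ↑F ⊆ S → ∀ t : ℝ,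
    FracTransversalLE F t → (∀ s : ℝ, FracTransversalLE F s → t ≤ s) →
    TransversalLE F (g t)

/-- The `(p,q)`-property: among any `p` members (with repetition allowed) some `q`
of them are intersecting. -/
def PQProperty (F : Finset (Set X)) (p q : ℕ) : Prop :=
  ∀ K : Fin p → Set X, (∀ i, K i ∈ F) →
    ∃ s : Finset (Fin p), s.card = q ∧ ∃ x, ∀ i ∈ s, x ∈ K i

/-- A compact set system: every subsystem with empty total intersection contains a
finite subfamily with empty intersection. -/
def CompactSystem (S : Set (Set X)) : Prop :=
  ∀ T ⊆ S, ⋂₀ T = ∅ → ∃ F : Finset (Set X), ↑F ⊆ T ∧ ⋂₀ (↑F : Set (Set X)) = ∅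

/-- The VC-dimension of `S` is at most `d`: every finite set shattered by `S` has
size at most `d`. -/
def VCDimLE (S : Set (Set X)) (d : ℕ) : Prop :=
  ∀ Y : Finset X, (∀ Z ⊆ Y, ∃ K ∈ S, (↑Y : Set X) ∩ K = ↑Z) → Y.card ≤ d

/-- `S^∩`: all intersections of nonempty subcollections of `S`. -/
def interClosure (S : Set (Set X)) : Set (Set X) :=
  {T | ∃ D ⊆ S, D.Nonempty ∧ T = ⋂₀ D}

end SetSystems

section Hypergraphs

variable {V : Type*} [DecidableEq V]

/-- An independent set of the hypergraph with edge set `E`: contains no edge. -/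
def IsIndep (E : Finset (Finset V)) (I : Set V) : Prop :=
  ∀ e ∈ E, ¬ ((↑e : Set V) ⊆ I)

/-- A maximal independent set. -/
def IsMaxIndep (E : Finset (Finset V)) (I : Set V) : Prop :=
  IsIndep E I ∧ ∀ J : Set V, IsIndep E J → I ⊆ J → J = I

/-- The ground set of the associated convexity space: the maximal independent sets. -/
abbrev MIS (E : Finset (Finset V)) : Type _ := {σ : Set V // IsMaxIndep E σ}

/-- `S_W`: the maximal independent sets containing `W`. -/
def SW (E : Finset (Finset V)) (W : Set V) : Set (MIS E) :=
  {σ : MIS E | W ⊆ σ.1}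

/-- The associated convexity space of the hypergraph with edge set `E`. -/
def assocC (E : Finset (Finset V)) : Set (Set (MIS E)) :=
  {T | ∃ W : Set V, T = SW E W}

/-- Property `T_k(m)`: among any `m` (not necessarily distinct) edges, some `k` of them
admit a system of distinct representatives which is an edge. -/
def PropT (E : Finset (Finset V)) (k m : ℕ) : Prop :=
  ∀ e : Fin m → Finset V, (∀ i, e i ∈ E) →
    ∃ (g : Fin k → Fin m) (v : Fin k → V), StrictMono g ∧ Function.Injective v ∧
      (∀ j, v j ∈ e (g j)) ∧ Finset.image v Finset.univ ∈ E

/-- The chromatic number of the hypergraph is at most `n`: the vertex set can be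
partitioned into (at most) `n` independent sets. -/
def ChromaticLE (E : Finset (Finset V)) (n : ℕ) : Prop :=
  ∃ P : Fin n → Set V, (∀ v : V, ∃! i, v ∈ P i) ∧
    ∀ i, (P i).Nonempty → IsIndep E (P i)

/-- The clique number is at most `w`: every set of vertices all of whose `k`-element
subsets are edges has size at most `w`. -/
def CliqueNumLE (E : Finset (Finset V)) (k w : ℕ) : Prop :=
  ∀ Q : Finset V, (∀ q ⊆ Q, q.card = k → q ∈ E) → Q.card ≤ w

/-- Property `δ_k(m)`: any sunflower of `m` edges contains `k` edges admitting a system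
of distinct representatives which is an edge. -/
def PropDelta (E : Finset (Finset V)) (k m : ℕ) : Prop :=
  ∀ G : Finset (Finset V), G ⊆ E → G.card = m →
    (∃ S : Finset V, ∀ e ∈ G, ∀ e' ∈ G, e ≠ e' → e ∩ e' = S) →
    ∃ (f : Fin k → Finset V) (v : Fin k → V), Function.Injective f ∧ (∀ j, f j ∈ G) ∧
      Function.Injective v ∧ (∀ j, v j ∈ f j) ∧ Finset.image v Finset.univ ∈ E

end Hypergraphs


def Ind0 {V : Type*} (E : Finset (Finset V)) (I : Set V) : Prop :=
  ∀ e ∈ E, ¬ ((↑e : Set V) ⊆ I)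

theorem Ind0.mono {V : Type*} {E : Finset (Finset V)} {I J : Set V} (h : Ind0 E J) (hIJ : I ⊆ J) :
    Ind0 E I := fun e he hs => h e he (hs.trans hIJ)

def Col {V : Type*} (E : Finset (Finset V)) (m : ℕ) : Prop :=
  ∀ A : Fin m → Fin m → Set V, (∀ a, ¬ Ind0 E (⋃ c, A a c)) →
    ∃ f : Fin m → Fin m, ¬ Ind0 E (⋃ a, A a (f a))

theorem col_of_propT {V : Type*} [DecidableEq V] {E : Finset (Finset V)} {k m : ℕ} (hm : 0 < m)
    (hT : PropT E k m) : Col E m := by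
  intro A hA
  have h1 : ∀ a, ∃ e ∈ E, (↑e : Set V) ⊆ ⋃ c, A a c := by
    intro a
    have := hA a
    unfold Ind0 at this
    push Not at this
    exact this
  choose e he hs using h1
  obtain ⟨g, v, hg, hv, hve, hvE⟩ := hT e he
  have h2 : ∀ j, ∃ c, v j ∈ A (g j) c := fun j => Set.mem_iUnion.1 (hs (g j) (hve j))
  choose c hc using h2
  let f : Fin m → Fin m := fun a => if h : ∃ j, g j = a then c h.choose else ⟨0, hm⟩
  refine ⟨f, fun hI => hI _ hvE ?_⟩
  intro x hx
  simp only [Finset.coe_image, Finset.coe_univ, Set.image_univ, Set.mem_range] at hx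
  obtain ⟨j, rfl⟩ := hx
  refine Set.mem_iUnion.2 ⟨g j, ?_⟩
  have hex : ∃ j', g j' = g j := ⟨j, rfl⟩
  have : f (g j) = c j := by
    simp only [f, dif_pos hex]
    congr 1
    exact hg.injective hex.choose_spec
  rw [this]
  exact hc j

theorem exists_tuple {V ι : Type*} {E : Finset (Finset V)} {m : ℕ}
    (hEm : ∀ e ∈ E, e.card ≤ m) (hEn : ∀ e ∈ E, e.Nonempty) (W : ι → Set V) (J : Finset ι)
    (hJ : ¬ Ind0 E (⋃ i ∈ J, W i)) :
    ∃ e : Fin m → ι, (∀ a, e a ∈ J) ∧ ¬ Ind0 E (⋃ a, W (e a)) := by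
  unfold Ind0 at hJ
  push Not at hJ
  obtain ⟨e, he, hs⟩ := hJ
  have h1 : ∀ x : e, ∃ i ∈ J, (x : V) ∈ W i := by
    intro x
    have := hs x.2
    simpa using this
  choose g hgJ hg using h1
  have hcard : Fintype.card e ≤ Fintype.card (Fin m) := by simpa using hEm e he
  obtain ⟨x0, hx0⟩ := hEn e he
  obtain ⟨emb⟩ := Function.Embedding.nonempty_of_card_le hcard
  have : Nonempty e := ⟨⟨x0, hx0⟩⟩
  refine ⟨fun a => g (Function.invFun emb a), fun a => hgJ _, fun hI => hI e he ?_⟩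
  intro x hx
  refine Set.mem_iUnion.2 ⟨emb ⟨x, hx⟩, ?_⟩
  simp only [Function.leftInverse_invFun emb.injective _]
  exact hg _

theorem matching' {V ι : Type*} {E : Finset (Finset V)} {m : ℕ}
    (hEm : ∀ e ∈ E, e.card ≤ m) (hEn : ∀ e ∈ E, e.Nonempty) (hm : 0 < m) (W : ι → Set V) (b : ℝ)
    (hb : ∀ J : Finset ι, b ≤ J.card → ¬ Ind0 E (⋃ i ∈ J, W i)) (n : ℕ) :
    ∀ U : Finset ι, U.card = n → ∃ (s : ℕ) (d : Fin s → Fin m → ι), (U.card : ℝ) ≤ b + s * m ∧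
      (∀ a c, d a c ∈ U) ∧ (∀ a, ¬ Ind0 E (⋃ c, W (d a c))) ∧
      (∀ a a' c c', d a c = d a' c' → a = a') := by
  induction n using Nat.strong_induction_on with
  | _ n ih =>
    intro U hU
    by_cases hlt : (U.card : ℝ) < b
    · refine ⟨0, Fin.elim0, ?_, fun a => a.elim0, fun a => a.elim0, fun a => a.elim0⟩
      simpa using hlt.le
    · obtain ⟨e, heU, he⟩ := exists_tuple hEm hEn W U (hb U (not_lt.1 hlt))
      let I := Finset.univ.image e
      have hIU : I ⊆ U := by
        intro x hx
        obtain ⟨a, -, rfl⟩ := Finset.mem_image.1 hx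
        exact heU a
      have hIc : I.card ≤ m := by simpa using (Finset.card_image_le (s := Finset.univ) (f := e))
      have hIp : 0 < I.card := Finset.card_pos.2 ⟨e ⟨0, hm⟩, Finset.mem_image_of_mem _ (Finset.mem_univ _)⟩
      have hc : (U \ I).card + I.card = U.card := Finset.card_sdiff_add_card_eq_card hIU
      obtain ⟨s, d, h1, h2, h3, h4⟩ := ih (U \ I).card (by omega) (U \ I) rfl
      have hnot : ∀ a c, d a c ∉ I := fun a c => (Finset.mem_sdiff.1 (h2 a c)).2
      have hin : ∀ c, e c ∈ I := fun c => Finset.mem_image_of_mem _ (Finset.mem_univ _)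
      refine ⟨s + 1, Fin.cons e d, ?_, ?_, ?_, ?_⟩
      · have : ((U \ I).card : ℝ) + I.card = U.card := by exact_mod_cast hc
        have h5 : (I.card : ℝ) ≤ m := by exact_mod_cast hIc
        push_cast
        linarith
      · intro a c
        refine Fin.cases ?_ (fun a => ?_) a
        · simpa using heU c
        · simpa using (Finset.mem_sdiff.1 (h2 a c)).1
      · intro a
        refine Fin.cases ?_ (fun a => ?_) a
        · simpa using he
        · simpa using h3 a
      · intro a a' c c'
        refine Fin.cases ?_ (fun a => ?_) a <;> refine Fin.cases ?_ (fun a' => ?_) a'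
        · simp
        · intro h
          simp only [Fin.cons_zero, Fin.cons_succ] at h
          exact absurd (h ▸ hin c) (hnot a' c')
        · intro h
          simp only [Fin.cons_zero, Fin.cons_succ] at h
          exact absurd (h ▸ hin c') (hnot a c)
        · intro h
          simp only [Fin.cons_succ] at h
          rw [h4 _ _ _ _ h]

theorem dense_bad {V ι : Type*} [Fintype ι] {E : Finset (Finset V)} {m : ℕ}
    (hEm : ∀ e ∈ E, e.card ≤ m) (hEn : ∀ e ∈ E, e.Nonempty) (hm : 0 < m) (hC : Col E m)
    (W : ι → Set V) (b : ℝ)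
    (hb : ∀ J : Finset ι, b ≤ J.card → ¬ Ind0 E (⋃ i ∈ J, W i)) (U : Finset ι)
    (hU : b ≤ U.card) :
    (((U.card : ℝ) - b) / m) ^ m ≤
      ((Finset.univ.filter (fun e : Fin m → ι => ¬ Ind0 E (⋃ c, W (e c)) ∧ ∀ c, e c ∈ U)).card : ℝ) := by
  obtain ⟨s, d, h1, h2, h3, h4⟩ := matching' hEm hEn hm W b hb _ U rfl
  have hmr : (0 : ℝ) < m := by exact_mod_cast hm
  have hs : ((U.card : ℝ) - b) / m ≤ s := by
    rw [div_le_iff₀ hmr]; linarith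
  have h0 : 0 ≤ ((U.card : ℝ) - b) / m := div_nonneg (by linarith) hmr.le
  refine (pow_le_pow_left₀ h0 hs m).trans ?_
  have h5 : ∀ h : Fin m → Fin s, ∃ f : Fin m → Fin m, ¬ Ind0 E (⋃ a, W (d (h a) (f a))) := by
    intro h
    exact hC (fun a c => W (d (h a) c)) (fun a => h3 (h a))
  choose f hf using h5
  have : (Finset.univ : Finset (Fin m → Fin s)).card ≤ (Finset.univ.filter (fun e : Fin m → ι => ¬ Ind0 E (⋃ c, W (e c)) ∧ ∀ c, e c ∈ U)).card := by
    refine Finset.card_le_card_of_injOn (fun h a => d (h a) (f h a)) ?_ ?_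
    · intro h _
      simp only [Finset.coe_filter, Finset.mem_univ, true_and, Set.mem_ofPred_eq]
      exact ⟨hf h, fun c => h2 _ _⟩
    · intro h _ h' _ heq
      funext a
      exact h4 _ _ _ _ (congrFun heq a)
  simp only [Finset.card_univ, Fintype.card_fun, Fintype.card_fin] at this
  exact_mod_cast this

theorem lemB (m : ℕ) (hm : 0 < m) (r : ℕ) : ∀ δ : ℝ, 0 < δ → ∃ β : ℝ, 0 < β ∧ ∀ (ι : Type*) [Fintype ι] [Nonempty ι]
    (B : (Fin m → ι) → Prop), (∀ η : ℝ, β ≤ η → ∀ U : Finset ι, η * Fintype.card ι ≤ U.card →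
      (η / (2 * m)) ^ m * (Fintype.card ι : ℝ) ^ m ≤
        ((Finset.univ.filter (fun e : Fin m → ι => B e ∧ ∀ c, e c ∈ U)).card : ℝ)) →
    ∀ G : Finset (Fin r → ι), δ * (Fintype.card ι : ℝ) ^ r ≤ G.card →
      ∃ e : Fin r → Fin m → ι, (∀ a, B (e a)) ∧ ∀ f : Fin r → Fin m, (fun a => e a (f a)) ∈ G := by
  induction r with
  | zero =>
    intro δ hδ
    refine ⟨1, one_pos, ?_⟩
    intro ι _ _ B _ G hG
    have : (0 : ℝ) < G.card := by
      refine lt_of_lt_of_le ?_ hG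
      simpa using hδ
    obtain ⟨g, hg⟩ := Finset.card_pos.1 (Nat.cast_pos.1 this)
    refine ⟨Fin.elim0, fun a => a.elim0, fun f => ?_⟩
    convert hg
  | succ r ih =>
    intro δ hδ
    have hmr : (0 : ℝ) < m := by exact_mod_cast hm
    set c : ℝ := (δ / 2 / (2 * m)) ^ m with hc
    have hcpos : 0 < c := by positivity
    obtain ⟨β, hβ, H⟩ := ih (c * (δ / 4)) (by positivity)
    refine ⟨min β (δ / 2), lt_min hβ (by positivity), ?_⟩
    intro ι _ _ B hB G hG
    set N : ℝ := (Fintype.card ι : ℝ) with hN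
    have hNpos : 0 < N := by rw [hN]; exact_mod_cast Fintype.card_pos
    let A : (Fin r → ι) → Finset ι := fun z => Finset.univ.filter (fun x => (Fin.cons x z : Fin (r+1) → ι) ∈ G)
    let G' : (Fin m → ι) → Finset (Fin r → ι) := fun e =>
      Finset.univ.filter (fun z => ∀ c, (Fin.cons (e c) z : Fin (r+1) → ι) ∈ G)
    let S : Finset (Fin r → ι) := Finset.univ.filter (fun z => δ / 2 * N ≤ (A z).card)
    have hGsum : (G.card : ℝ) = ∑ z, ((A z).card : ℝ) := by
      have : G.card = ∑ z, (A z).card := by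
        rw [Finset.card_eq_sum_card_fiberwise (f := fun g : Fin (r+1) → ι => Fin.tail g) (t := Finset.univ) (by intro x _; simp)]
        refine Finset.sum_congr rfl fun z _ => ?_
        refine Finset.card_bij' (fun g _ => g 0) (fun x _ => Fin.cons x z) ?_ ?_ ?_ ?_
        · intro g hg
          obtain ⟨h1, h2⟩ := Finset.mem_filter.1 hg
          simp only [A, Finset.mem_filter, Finset.mem_univ, true_and]
          rw [← h2, Fin.cons_self_tail]; exact h1
        · intro x hx
          simp only [A, Finset.mem_filter, Finset.mem_univ, true_and] at hx
          simp [hx]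
        · intro g hg
          obtain ⟨h1, h2⟩ := Finset.mem_filter.1 hg
          rw [← h2, Fin.cons_self_tail]
        · intro x hx
          simp
      exact_mod_cast this
    have hS : δ / 2 * N ^ r ≤ S.card := by
      have h1 : ∑ z, ((A z).card : ℝ) ≤ ∑ z, ((if z ∈ S then N else 0) + δ / 2 * N) := by
        refine Finset.sum_le_sum fun z _ => ?_
        by_cases hz : z ∈ S
        · rw [if_pos hz]
          have : ((A z).card : ℝ) ≤ N := by rw [hN]; exact_mod_cast Finset.card_le_univ _
          have : 0 < δ / 2 * N := by positivity
          linarith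
        · rw [if_neg hz]
          have : ¬ (δ / 2 * N ≤ (A z).card) := fun h => hz (Finset.mem_filter.2 ⟨Finset.mem_univ _, h⟩)
          linarith
      rw [Finset.sum_add_distrib, Finset.sum_ite_mem, Finset.univ_inter, Finset.sum_const, Finset.sum_const, ← hGsum,
        Finset.card_univ, Fintype.card_fun, Fintype.card_fin, nsmul_eq_mul, nsmul_eq_mul] at h1
      push_cast at h1
      rw [← hN] at h1
      have h2 := hG.trans h1
      rw [pow_succ] at h2
      have h3 : (δ / 2 * N ^ r) * N ≤ S.card * N := by nlinarith
      exact le_of_mul_le_mul_right h3 hNpos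
    have hex : ∃ e : Fin m → ι, B e ∧ c * (δ / 4) * N ^ r ≤ ((G' e).card : ℝ) := by
      by_contra hcon
      push Not at hcon
      have h1 : ∑ z ∈ S, (c * N ^ m) ≤ ∑ z ∈ S, ((Finset.univ.filter (fun e : Fin m → ι => B e ∧ ∀ c, e c ∈ A z)).card : ℝ) := by
        refine Finset.sum_le_sum fun z hz => ?_
        exact hB (δ / 2) (min_le_right _ _) (A z) (Finset.mem_filter.1 hz).2
      have h2 : ∑ z ∈ S, ((Finset.univ.filter (fun e : Fin m → ι => B e ∧ ∀ c, e c ∈ A z)).card : ℝ)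
          ≤ ∑ e ∈ Finset.univ.filter B, ((G' e).card : ℝ) := by
        have : ∑ z ∈ S, (Finset.univ.filter (fun e : Fin m → ι => B e ∧ ∀ c, e c ∈ A z)).card
          ≤ ∑ e ∈ Finset.univ.filter B, (G' e).card := by
          rw [← Finset.card_sigma, ← Finset.card_sigma]
          refine Finset.card_le_card_of_injOn (fun p => ⟨p.2, p.1⟩) ?_ ?_
          · rintro ⟨z, e⟩ h
            simp only [Finset.coe_sigma, Set.mem_sigma_iff, Finset.mem_coe, Finset.mem_filter, Finset.mem_univ, true_and, A, G'] at h ⊢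
            exact h.2
          · rintro ⟨z, e⟩ _ ⟨z', e'⟩ _ h
            simp only [Sigma.mk.injEq, heq_eq_eq] at h
            obtain ⟨rfl, rfl⟩ := h
            rfl
        exact_mod_cast this
      have h3 : ∑ e ∈ Finset.univ.filter B, ((G' e).card : ℝ) ≤ ∑ e ∈ (Finset.univ : Finset (Fin m → ι)).filter B, (c * (δ / 4) * N ^ r) := by
        refine Finset.sum_le_sum fun e he => ?_
        exact (hcon e (Finset.mem_filter.1 he).2).le
      have h4 : ∑ e ∈ (Finset.univ : Finset (Fin m → ι)).filter B, (c * (δ / 4) * N ^ r) ≤ N ^ m * (c * (δ / 4) * N ^ r) := by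
        rw [Finset.sum_const, nsmul_eq_mul]
        refine mul_le_mul_of_nonneg_right ?_ (by positivity)
        have := Finset.card_le_univ ((Finset.univ : Finset (Fin m → ι)).filter B)
        rw [Fintype.card_fun, Fintype.card_fin] at this
        rw [hN]; exact_mod_cast this
      rw [Finset.sum_const, nsmul_eq_mul] at h1
      have h5 := h1.trans (h2.trans (h3.trans h4))
      have h6 : δ / 2 * N ^ r * (c * N ^ m) ≤ S.card * (c * N ^ m) :=
        mul_le_mul_of_nonneg_right hS (by positivity)
      have h7 : 0 < N ^ m * (c * δ * N ^ r) := by positivity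
      nlinarith
    obtain ⟨e0, he0, hG'⟩ := hex
    obtain ⟨e, he, hf⟩ := H ι B (fun η hη => hB η ((min_le_left _ _).trans hη)) (G' e0) hG'
    refine ⟨Fin.cons e0 e, ?_, ?_⟩
    · intro a
      refine Fin.cases ?_ (fun a => ?_) a
      · simpa using he0
      · simpa using he a
    · intro f
      have := (Finset.mem_filter.1 (hf (fun a => f a.succ))).2 (f 0)
      convert this using 1
      funext a
      refine Fin.cases ?_ (fun a => ?_) a <;> simp

theorem fracHelly (m : ℕ) (hm : 0 < m) (δ : ℝ) (hδ : 0 < δ) : ∃ β : ℝ, 0 < β ∧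
    ∀ (V : Type*) (E : Finset (Finset V)), (∀ e ∈ E, e.card ≤ m) → (∀ e ∈ E, e.Nonempty) → Col E m →
    ∀ (ι : Type*) [Fintype ι] [Nonempty ι] (W : ι → Set V),
    δ * (Fintype.card ι : ℝ) ^ m ≤
      ((Finset.univ.filter (fun e : Fin m → ι => Ind0 E (⋃ c, W (e c)))).card : ℝ) →
    ∃ J : Finset ι, β * Fintype.card ι ≤ J.card ∧ Ind0 E (⋃ i ∈ J, W i) := by
  obtain ⟨β, hβ, H⟩ := lemB m hm m δ hδ
  refine ⟨β / 2, by positivity, ?_⟩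
  intro V E hEm hEn hC ι _ _ W hd
  by_contra hcon
  push Not at hcon
  have hmr : (0 : ℝ) < m := by exact_mod_cast hm
  obtain ⟨e, he, hf⟩ := H ι (fun e => ¬ Ind0 E (⋃ c, W (e c))) (by
    intro η hη U hU
    have hN : (0 : ℝ) ≤ Fintype.card ι := by positivity
    have h1 : β * Fintype.card ι ≤ η * Fintype.card ι := mul_le_mul_of_nonneg_right hη hN
    have h2 : 0 ≤ β * Fintype.card ι := by positivity
    have hbU : β / 2 * Fintype.card ι ≤ U.card := by linarith
    have key := dense_bad hEm hEn hm hC W (β / 2 * Fintype.card ι) hcon U hbU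
    refine le_trans ?_ (key.trans (le_of_eq (by congr!)))
    rw [← mul_pow]
    have : 0 < η := lt_of_lt_of_le hβ hη
    refine pow_le_pow_left₀ (by positivity) ?_ m
    rw [le_div_iff₀ hmr]
    have : η / (2 * m) * Fintype.card ι * m = η * Fintype.card ι / 2 := by field_simp
    rw [this]
    linarith) _ hd
  obtain ⟨f, hf'⟩ := hC (fun a c => W (e a c)) he
  exact hf' (Finset.mem_filter.1 (hf f)).2

theorem ramsey_aux (k : ℕ) : ∀ a b : ℕ, ∃ N : ℕ, ∀ (α : Type) (S : Finset α) (P : Finset α → Prop),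
    N ≤ S.card → (∃ Q ⊆ S, a ≤ Q.card ∧ ∀ q ⊆ Q, q.card = k → P q) ∨
      (∃ Q ⊆ S, b ≤ Q.card ∧ ∀ q ⊆ Q, q.card = k → ¬ P q) := by
  induction k with
  | zero =>
    intro a b
    refine ⟨max a b, fun α S P hS => ?_⟩
    by_cases h : P ∅
    · refine Or.inl ⟨S, subset_rfl, (le_max_left _ _).trans hS, fun q _ hq => ?_⟩
      rw [Finset.card_eq_zero.1 hq]; exact h
    · refine Or.inr ⟨S, subset_rfl, (le_max_right _ _).trans hS, fun q _ hq => ?_⟩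
      rw [Finset.card_eq_zero.1 hq]; exact h
  | succ k ih =>
    intro a
    induction a with
    | zero =>
      intro b
      refine ⟨0, fun α S P _ => Or.inl ⟨∅, Finset.empty_subset _, by simp, fun q hq hc => ?_⟩⟩
      rw [Finset.subset_empty.1 hq] at hc; simp at hc
    | succ a iha =>
      intro b
      induction b with
      | zero =>
        refine ⟨0, fun α S P _ => Or.inr ⟨∅, Finset.empty_subset _, by simp, fun q hq hc => ?_⟩⟩
        rw [Finset.subset_empty.1 hq] at hc; simp at hc
      | succ b ihb =>
        obtain ⟨N1, h1⟩ := iha (b + 1)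
        obtain ⟨N2, h2⟩ := ihb
        obtain ⟨N, h⟩ := ih N1 N2
        refine ⟨N + 1, fun α S P hS => ?_⟩
        obtain ⟨x, hx⟩ : S.Nonempty := Finset.card_pos.1 (by omega)
        have hext : ∀ (P' : Finset α → Prop) (Q1 Q : Finset α), Q ⊆ Q1 →
            (∀ q ⊆ Q1, q.card = k → P' (insert x q)) → (∀ q ⊆ Q, q.card = k + 1 → P' q) →
            ∀ q ⊆ insert x Q, q.card = k + 1 → P' q := by
          intro P' Q1 Q hQ hA hB q hq hc
          by_cases hxq : x ∈ q
          · have := hA (q.erase x) (fun y hy => by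
              obtain ⟨hy1, hy2⟩ := Finset.mem_erase.1 hy
              rcases Finset.mem_insert.1 (hq hy2) with h | h
              · exact absurd h hy1
              · exact hQ h) (by rw [Finset.card_erase_of_mem hxq]; omega)
            rwa [Finset.insert_erase hxq] at this
          · refine hB q (fun y hy => ?_) hc
            rcases Finset.mem_insert.1 (hq hy) with h | h
            · exact absurd (h ▸ hy) hxq
            · exact h
        have hcS : (S.erase x).card = S.card - 1 := Finset.card_erase_of_mem hx
        rcases h α (S.erase x) (fun q => P (insert x q)) (by omega) with ⟨Q1, hQ1, hc1, hP1⟩ | ⟨Q1, hQ1, hc1, hP1⟩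
        · rcases h1 α Q1 P hc1 with ⟨Q, hQ, hc, hP⟩ | ⟨Q, hQ, hc, hP⟩
          · refine Or.inl ⟨insert x Q, ?_, ?_, hext P Q1 Q hQ hP1 hP⟩
            · exact Finset.insert_subset hx ((hQ.trans hQ1).trans (Finset.erase_subset _ _))
            · have : x ∉ Q := fun h => Finset.notMem_erase x S (hQ1 (hQ h))
              rw [Finset.card_insert_of_notMem this]; omega
          · exact Or.inr ⟨Q, (hQ.trans hQ1).trans (Finset.erase_subset _ _), hc, hP⟩
        · rcases h2 α Q1 P hc1 with ⟨Q, hQ, hc, hP⟩ | ⟨Q, hQ, hc, hP⟩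
          · exact Or.inl ⟨Q, (hQ.trans hQ1).trans (Finset.erase_subset _ _), hc, hP⟩
          · refine Or.inr ⟨insert x Q, ?_, ?_, hext (fun q => ¬ P q) Q1 Q hQ hP1 hP⟩
            · exact Finset.insert_subset hx ((hQ.trans hQ1).trans (Finset.erase_subset _ _))
            · have : x ∉ Q := fun h => Finset.notMem_erase x S (hQ1 (hQ h))
              rw [Finset.card_insert_of_notMem this]; omega

theorem avg_aux {α κ A ι : Type*} [Fintype α] [Fintype κ] [Fintype A] [Fintype ι] [Nonempty ι]
    (φ : A → α → κ) (hφ : ∀ a, Function.Injective (φ a)) (G : Finset (α → ι))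
    (h : ∀ z : κ → ι, ∃ a, z ∘ φ a ∈ G) :
    Fintype.card ι ^ Fintype.card α ≤ Fintype.card A * G.card := by
  set N := Fintype.card ι with hN
  have hNpos : 0 < N := Fintype.card_pos
  obtain ⟨a0, -⟩ := h (fun _ => Classical.arbitrary ι)
  have hle : Fintype.card α ≤ Fintype.card κ := Fintype.card_le_of_injective _ (hφ a0)
  have h1 : ∀ a, (Finset.univ.filter (fun z : κ → ι => z ∘ φ a ∈ G)).card ≤
      G.card * N ^ (Fintype.card κ - Fintype.card α) := by
    intro a
    have hc : Fintype.card ({x : κ // x ∉ Set.range (φ a)} → ι) = N ^ (Fintype.card κ - Fintype.card α) := by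
      rw [Fintype.card_fun, Fintype.card_subtype_compl, ← hN]
      congr 2
      exact Fintype.card_congr (Equiv.ofInjective _ (hφ a)).symm
    rw [← hc, ← Finset.card_univ, ← Finset.card_product]
    refine Finset.card_le_card_of_injOn (fun z => (z ∘ φ a, fun x => z x.1)) ?_ ?_
    · intro z hz
      simp only [Finset.coe_filter, Finset.mem_univ, true_and, Set.mem_ofPred_eq] at hz
      simp [hz]
    · intro z _ z' _ heq
      simp only [Prod.mk.injEq] at heq
      funext x
      by_cases hx : x ∈ Set.range (φ a)
      · obtain ⟨y, rfl⟩ := hx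
        exact congrFun heq.1 y
      · exact congrFun heq.2 ⟨x, hx⟩
  have h2 : N ^ Fintype.card κ ≤ ∑ a : A, (Finset.univ.filter (fun z : κ → ι => z ∘ φ a ∈ G)).card := by
    have : (Finset.univ : Finset (κ → ι)) ⊆ Finset.univ.biUnion (fun a : A => Finset.univ.filter (fun z : κ → ι => z ∘ φ a ∈ G)) := by
      intro z _
      obtain ⟨a, ha⟩ := h z
      simp only [Finset.mem_biUnion, Finset.mem_univ, true_and, Finset.mem_filter]
      exact ⟨a, ha⟩
    have := (Finset.card_le_card this).trans Finset.card_biUnion_le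
    rwa [Finset.card_univ, Fintype.card_fun] at this
  have h3 := h2.trans (Finset.sum_le_sum fun a _ => h1 a)
  rw [Finset.sum_const, Finset.card_univ, smul_eq_mul, ← mul_assoc] at h3
  have h4 : N ^ Fintype.card κ = N ^ Fintype.card α * N ^ (Fintype.card κ - Fintype.card α) := by
    rw [← pow_add]; congr 1; omega
  rw [h4] at h3
  exact Nat.le_of_mul_le_mul_right h3 (pow_pos hNpos _)

theorem density_aux (m k w : ℕ) (hk : 2 ≤ k) : ∃ δ : ℝ, 0 < δ ∧ ∀ (V : Type*) (E : Finset (Finset V)),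
    (∀ e ∈ E, e.card = k) → (∀ Q : Finset V, (∀ q ⊆ Q, q.card = k → q ∈ E) → Q.card ≤ w) →
    ∀ (ι : Type*) [Fintype ι] [Nonempty ι] (g : ι → V),
    δ * (Fintype.card ι : ℝ) ^ m ≤
      ((Finset.univ.filter (fun y : Fin m → ι => Ind0 E (⋃ c, {g (y c)}))).card : ℝ) := by
  obtain ⟨R, hR⟩ := ramsey_aux k (max (w + 1) k) m
  refine ⟨1 / ((Fintype.card (Fin m ↪ Fin R) : ℝ) + 1), by positivity, ?_⟩
  intro V E hE hQ ι _ _ g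
  have key := avg_aux (fun (φ : Fin m ↪ Fin R) => (φ : Fin m → Fin R)) (fun φ => φ.injective)
    (Finset.univ.filter (fun y : Fin m → ι => Ind0 E (⋃ c, {g (y c)}))) (by
      intro z
      rcases hR (Fin R) Finset.univ (fun q => q.image (g ∘ z) ∈ E) (by simp) with ⟨Q, -, hc, hP⟩ | ⟨Q, -, hc, hP⟩
      · exfalso
        have hinj : Set.InjOn (g ∘ z) (Q : Set (Fin R)) := by
          intro x hx y hy hxy
          by_contra hne
          have hsub : ({x, y} : Finset (Fin R)) ⊆ Q := by
            intro t ht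
            rcases Finset.mem_insert.1 ht with rfl | ht
            · exact hx
            · rw [Finset.mem_singleton.1 ht]; exact hy
          obtain ⟨q, hq1, hq2, hq3⟩ := Finset.exists_subsuperset_card_eq hsub
            (by rw [Finset.card_pair hne]; exact hk) ((le_max_right _ _).trans hc)
          have h1 := hE _ (hP q hq2 hq3)
          have h2 : Set.InjOn (g ∘ z) (q : Set (Fin R)) := Finset.card_image_iff.1 (h1.trans hq3.symm)
          exact hne (h2 (hq1 (by simp)) (hq1 (by simp)) hxy)
        have h1 := hQ (Q.image (g ∘ z)) (by
          intro q' hq' hcq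
          obtain ⟨q, hq, rfl⟩ := Finset.subset_image_iff.1 hq'
          have h3 : Set.InjOn (g ∘ z) (q : Set (Fin R)) := hinj.mono hq
          rw [Finset.card_image_iff.2 h3] at hcq
          exact hP q hq hcq)
        rw [Finset.card_image_iff.2 hinj] at h1
        have := (le_max_left _ _).trans hc
        omega
      · obtain ⟨Q', hQ', hcQ'⟩ := Finset.exists_subset_card_eq hc
        refine ⟨(Q'.orderEmbOfFin hcQ').toEmbedding, ?_⟩
        simp only [Finset.mem_filter, Finset.mem_univ, true_and]
        intro e he hsub
        have h1 : ∀ x : e, ∃ i ∈ Q', g (z i) = x := by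
          intro x
          obtain ⟨c, hc⟩ := Set.mem_iUnion.1 (hsub x.2)
          exact ⟨_, Finset.orderEmbOfFin_mem Q' hcQ' c, (Set.mem_singleton_iff.1 hc).symm⟩
        choose i hi hgi using h1
        have himg : (Finset.univ.image i).image (g ∘ z) = e := by
          ext x
          simp only [Finset.mem_image, Finset.mem_univ, true_and, Function.comp]
          constructor
          · rintro ⟨_, ⟨y, rfl⟩, rfl⟩
            rw [hgi]; exact y.2
          · intro hx
            exact ⟨_, ⟨⟨x, hx⟩, rfl⟩, hgi _⟩
        refine hP (Finset.univ.image i) ?_ ?_ (by rw [himg]; exact he)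
        · intro t ht
          obtain ⟨x, -, rfl⟩ := Finset.mem_image.1 ht
          exact hQ' (hi x)
        · have h2 : (Finset.univ.image i).card ≤ e.card := by
            refine Finset.card_image_le.trans ?_
            simp
          have h3 : e.card ≤ (Finset.univ.image i).card := by
            conv_lhs => rw [← himg]
            exact Finset.card_image_le
          rw [← hE e he]; omega)
  rw [Fintype.card_fin] at key
  have key' : (Fintype.card ι : ℝ) ^ m ≤ (Fintype.card (Fin m ↪ Fin R) : ℝ) *
      ((Finset.univ.filter (fun y : Fin m → ι => Ind0 E (⋃ c, {g (y c)}))).card : ℝ) := by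
    exact_mod_cast key
  rw [div_mul_eq_mul_div, one_mul, div_le_iff₀ (by positivity)]
  have : (0 : ℝ) ≤ ((Finset.univ.filter (fun y : Fin m → ι => Ind0 E (⋃ c, {g (y c)}))).card : ℝ) := by positivity
  nlinarith

theorem mwu_aux {V : Type*} [Fintype V] {E : Finset (Finset V)} {β : ℝ} (hβ1 : β ≤ 1)
    (H : ∀ wt : V → ℕ, 0 < ∑ v, wt v → ∃ I : Set V, Ind0 E I ∧
      β * ((∑ v, wt v : ℕ) : ℝ) ≤ ((∑ v, if v ∈ I then wt v else 0 : ℕ) : ℝ)) [Nonempty V] (n : ℕ) :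
    ∃ σ : Fin n → Set V, (∀ i, Ind0 E (σ i)) ∧
      ∑ v, (1 / 2 : ℝ) ^ (Finset.univ.filter (fun i => v ∈ σ i)).card ≤ Fintype.card V * (1 - β / 2) ^ n := by
  induction n with
  | zero => exact ⟨Fin.elim0, fun i => i.elim0, by simp⟩
  | succ n ih =>
    obtain ⟨σ, hσ, hs⟩ := ih
    set c : V → ℕ := fun v => (Finset.univ.filter (fun i => v ∈ σ i)).card with hc
    have hcn : ∀ v, c v ≤ n := fun v => by
      simpa using Finset.card_le_univ (Finset.univ.filter (fun i => v ∈ σ i))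
    obtain ⟨I, hI, hw⟩ := H (fun v => 2 ^ (n - c v)) (Finset.sum_pos (fun v _ => by positivity) Finset.univ_nonempty)
    have hpow : ∀ v, ((2 : ℝ) ^ (n - c v)) = 2 ^ n * (1 / 2 : ℝ) ^ c v := by
      intro v
      rw [div_pow, one_pow, mul_one_div, eq_div_iff (by positivity), ← pow_add]
      congr 1
      have := hcn v
      omega
    push_cast at hw
    have hw' : β * ∑ v, (1 / 2 : ℝ) ^ c v ≤ ∑ v, if v ∈ I then (1 / 2 : ℝ) ^ c v else 0 := by
      have e1 : ∑ v, (2 : ℝ) ^ (n - c v) = 2 ^ n * ∑ v, (1 / 2 : ℝ) ^ c v := by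
        rw [Finset.mul_sum]; exact Finset.sum_congr rfl fun v _ => hpow v
      have e2 : (∑ v, if v ∈ I then (2 : ℝ) ^ (n - c v) else 0) = 2 ^ n * ∑ v, if v ∈ I then (1 / 2 : ℝ) ^ c v else 0 := by
        rw [Finset.mul_sum]
        refine Finset.sum_congr rfl fun v _ => ?_
        split_ifs
        · exact hpow v
        · simp
      rw [e1, e2] at hw
      have h2 : (0 : ℝ) < 2 ^ n := by positivity
      refine le_of_mul_le_mul_left ?_ h2
      linarith
    refine ⟨Fin.cons I σ, ?_, ?_⟩
    · intro i
      refine Fin.cases ?_ (fun i => ?_) i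
      · simpa using hI
      · simpa using hσ i
    · have hcc : ∀ v, (1 / 2 : ℝ) ^ (Finset.univ.filter (fun i => v ∈ (Fin.cons I σ : Fin (n+1) → Set V) i)).card
          = (1 / 2 : ℝ) ^ c v - 1 / 2 * (if v ∈ I then (1 / 2 : ℝ) ^ c v else 0) := by
        intro v
        have : (Finset.univ.filter (fun i => v ∈ (Fin.cons I σ : Fin (n+1) → Set V) i)).card
            = (if v ∈ I then 1 else 0) + c v := by
          rw [Finset.card_filter, Fin.sum_univ_succ, hc]
          simp only [Fin.cons_zero, Fin.cons_succ, Finset.card_filter]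
        rw [this]
        split_ifs
        · rw [pow_add]; ring
        · simp
      rw [Finset.sum_congr rfl fun v _ => hcc v, Finset.sum_sub_distrib, ← Finset.mul_sum]
      have h3 : ∑ v, (1 / 2 : ℝ) ^ c v * (1 - β / 2) ≤ Fintype.card V * (1 - β / 2) ^ n * (1 - β / 2) := by
        rw [← Finset.sum_mul]
        exact mul_le_mul_of_nonneg_right hs (by linarith)
      rw [← Finset.sum_mul] at h3
      rw [pow_succ]
      nlinarith

theorem mwu (β : ℝ) (hβ : 0 < β) : ∃ p : ℕ, 0 < p ∧ ∀ (V : Type*) [Fintype V] [Nonempty V] (E : Finset (Finset V)),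
    (∀ wt : V → ℕ, 0 < ∑ v, wt v → ∃ I : Set V, Ind0 E I ∧
      β * ((∑ v, wt v : ℕ) : ℝ) ≤ ((∑ v, if v ∈ I then wt v else 0 : ℕ) : ℝ)) →
    ∃ (s : ℕ) (σ : Fin (p * s) → Set V), 0 < s ∧ (∀ i, Ind0 E (σ i)) ∧
      ∀ v, s ≤ (Finset.univ.filter (fun i => v ∈ σ i)).card := by
  set γ := min β 1 with hγ
  have hγ0 : 0 < γ := lt_min hβ one_pos
  have hγ1 : γ ≤ 1 := min_le_right _ _
  obtain ⟨p, hp⟩ := exists_pow_lt_of_lt_one (show (0 : ℝ) < 1 / 4 by norm_num) (show 1 - γ / 2 < 1 by linarith)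
  refine ⟨p, ?_, ?_⟩
  · rcases Nat.eq_zero_or_pos p with rfl | h
    · norm_num at hp
    · exact h
  intro V _ _ E H
  set s := Fintype.card V + 1 with hs
  obtain ⟨σ, hσ, hsum⟩ := mwu_aux hγ1 (E := E) (by
    intro wt hwt
    obtain ⟨I, hI, h⟩ := H wt hwt
    refine ⟨I, hI, le_trans (mul_le_mul_of_nonneg_right (min_le_left _ _) (by positivity)) h⟩) (p * s)
  refine ⟨s, σ, by omega, hσ, fun v => ?_⟩
  by_contra hlt
  push Not at hlt
  have h1 : (1 / 2 : ℝ) ^ (Finset.univ.filter (fun i => v ∈ σ i)).card ≤ Fintype.card V * (1 - γ / 2) ^ (p * s) :=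
    (Finset.single_le_sum (f := fun v => (1 / 2 : ℝ) ^ (Finset.univ.filter (fun i => v ∈ σ i)).card)
      (fun v _ => by positivity) (Finset.mem_univ v)).trans hsum
  have h2 : (1 / 2 : ℝ) ^ s ≤ (1 / 2 : ℝ) ^ (Finset.univ.filter (fun i => v ∈ σ i)).card :=
    pow_le_pow_of_le_one (by norm_num) (by norm_num) hlt.le
  have h3 : (1 - γ / 2) ^ (p * s) ≤ (1 / 4 : ℝ) ^ s := by
    rw [pow_mul]
    exact pow_le_pow_left₀ (pow_nonneg (by linarith) _) hp.le _
  have h4 : (1 / 2 : ℝ) ^ s ≤ Fintype.card V * (1 / 4 : ℝ) ^ s :=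
    h2.trans (h1.trans (mul_le_mul_of_nonneg_left h3 (by positivity)))
  have h5 : (1 / 4 : ℝ) ^ s = (1 / 2) ^ s * (1 / 2) ^ s := by rw [← mul_pow]; norm_num
  rw [h5, ← mul_assoc] at h4
  have h6 : (0 : ℝ) < (1 / 2) ^ s := by positivity
  have h7 : 1 ≤ Fintype.card V * (1 / 2 : ℝ) ^ s := by
    by_contra hh
    push Not at hh
    nlinarith
  rw [div_pow, one_pow, mul_one_div, le_div_iff₀ (by positivity), one_mul] at h7
  have h8 : (2 : ℕ) ^ s ≤ Fintype.card V := by exact_mod_cast h7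
  have h9 : s < 2 ^ s := Nat.lt_two_pow_self
  omega

theorem selection (m' : ℕ) : ∃ β : ℝ, 0 < β ∧
    ∀ (V : Type*) (E : Finset (Finset V)), (∀ e ∈ E, e.card ≤ m' + 1) → (∀ e ∈ E, e.Nonempty) → Col E (m' + 1) →
    ∀ (Y : Type*) [Fintype Y] [Nonempty Y] (σ : Y → Set V), (∀ y, Ind0 E (σ y)) →
    ∃ τ : Set V, Ind0 E τ ∧ β * (Fintype.card Y : ℝ) ^ (Fintype.card (Fin m' → Fin (m' + 1))) ≤
      ((Finset.univ.filter (fun T : (Fin m' → Fin (m' + 1)) → Y => (⋂ r, σ (T r)) ⊆ τ)).card : ℝ) := by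
  obtain ⟨β, hβ, H⟩ := fracHelly (m' + 1) (Nat.succ_pos _) (1 / ((m' + 1 : ℕ) : ℝ)) (by positivity)
  refine ⟨β, hβ, ?_⟩
  intro V E hEm hEn hC Y _ _ σ hσ
  have key := avg_aux (α := Fin (m' + 1) × (Fin m' → Fin (m' + 1))) (κ := Fin (m' + 1) → Fin (m' + 1)) (ι := Y)
    (fun (i : Fin (m' + 1)) cr => (i.insertNth cr.1 cr.2 : Fin (m' + 1) → Fin (m' + 1)))
    (by
      rintro i ⟨c, r⟩ ⟨c', r'⟩ h
      have h1 := congrFun h i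
      have h2 := congrArg (i.removeNth) h
      simp at h1 h2
      simp [h1, h2])
    (Finset.univ.filter (fun T => Ind0 E (⋃ c, ⋂ r, σ (T (c, r))))) (by
      intro z
      by_contra hcon
      push Not at hcon
      simp only [Finset.mem_filter, Finset.mem_univ, true_and, Function.comp] at hcon
      obtain ⟨f, hf⟩ := hC (fun a c => ⋂ r, σ (z (a.insertNth c r))) hcon
      refine hf ((hσ (z f)).mono ?_)
      refine Set.iUnion_subset fun a => ?_
      refine (Set.iInter_subset _ (a.removeNth f)).trans ?_
      rw [Fin.insertNth_self_removeNth])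
  have hinj : (Finset.univ.filter (fun T : Fin (m' + 1) × (Fin m' → Fin (m' + 1)) → Y => Ind0 E (⋃ c, ⋂ r, σ (T (c, r))))).card
      ≤ (Finset.univ.filter (fun e : Fin (m' + 1) → ((Fin m' → Fin (m' + 1)) → Y) => Ind0 E (⋃ c, ⋂ r, σ (e c r)))).card := by
    refine Finset.card_le_card_of_injOn (fun T c r => T (c, r)) ?_ ?_
    · intro T hT
      simpa using hT
    · intro T _ T' _ h
      funext ⟨c, r⟩
      exact congrFun (congrFun h c) r
  obtain ⟨J, hJ, hI⟩ := H V E hEm hEn hC ((Fin m' → Fin (m' + 1)) → Y) (fun T => ⋂ r, σ (T r)) (by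
    have h1 := key.trans (Nat.mul_le_mul_left _ hinj)
    rw [Fintype.card_prod, mul_comm (Fintype.card (Fin (m' + 1))), pow_mul, ← Fintype.card_fun, Fintype.card_fin] at h1
    rw [div_mul_eq_mul_div, one_mul, div_le_iff₀ (by positivity), mul_comm]
    exact_mod_cast h1)
  refine ⟨_, hI, ?_⟩
  rw [Fintype.card_fun] at hJ
  push_cast at hJ ⊢
  refine hJ.trans ?_
  have : J.card ≤ (Finset.univ.filter (fun T : (Fin m' → Fin (m' + 1)) → Y => (⋂ r, σ (T r)) ⊆ ⋃ i ∈ J, ⋂ r, σ (i r))).card := by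
    refine Finset.card_le_card fun T hT => ?_
    simp only [Finset.mem_filter, Finset.mem_univ, true_and]
    exact Set.subset_biUnion_of_mem (u := fun i : (Fin m' → Fin (m' + 1)) → Y => ⋂ r, σ (i r)) hT
  exact_mod_cast this

theorem weights_aux {V : Type*} [Fintype V] {E : Finset (Finset V)} {β : ℝ}
    (H : ∀ (wt : V → ℕ), 0 < ∑ v, wt v → ∃ J : Finset (Σ v, Fin (wt v)),
      β * (Fintype.card (Σ v, Fin (wt v)) : ℝ) ≤ J.card ∧
        Ind0 E (⋃ i ∈ J, {i.1})) (wt : V → ℕ) (hw : 0 < ∑ v, wt v) :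
    ∃ I : Set V, Ind0 E I ∧
      β * ((∑ v, wt v : ℕ) : ℝ) ≤ ((∑ v, if v ∈ I then wt v else 0 : ℕ) : ℝ) := by
  obtain ⟨J, hJ, hI⟩ := H wt hw
  refine ⟨_, hI, ?_⟩
  have h1 : Fintype.card (Σ v, Fin (wt v)) = ∑ v, wt v := by simp
  rw [h1] at hJ
  refine hJ.trans ?_
  norm_cast
  calc J.card ≤ ((Finset.univ.filter (fun v => v ∈ ⋃ i ∈ J, ({i.1} : Set V))).sigma
        (fun v => (Finset.univ : Finset (Fin (wt v))))).card := by
        apply Finset.card_le_card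
        intro i hi
        simp only [Finset.mem_sigma, Finset.mem_filter, Finset.mem_univ, true_and, and_true]
        simp only [Set.mem_iUnion, Set.mem_singleton_iff]
        exact ⟨i, hi, rfl⟩
    _ = _ := by
        rw [Finset.card_sigma, Finset.sum_filter]
        simp only [Finset.card_univ, Fintype.card_fin]

theorem greedy_aux {V R : Type*} [Fintype R] [DecidableEq R] {E : Finset (Finset V)} {β : ℝ} (hβ : 0 < β)
    (hEn : ∀ e ∈ E, e.Nonempty) {n s : ℕ} (hs : 0 < s)
    (σ : Fin n → Set V) (hσ : ∀ i, Ind0 E (σ i))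
    (hcov : ∀ v, s ≤ (Finset.univ.filter (fun i => v ∈ σ i)).card)
    (H : ∀ (Y : Type) [Fintype Y] [Nonempty Y] (σ : Y → Set V), (∀ y, Ind0 E (σ y)) →
      ∃ τ : Set V, Ind0 E τ ∧ β * (Fintype.card Y : ℝ) ^ (Fintype.card R) ≤
      ((Finset.univ.filter (fun T : R → Y => (⋂ r, σ (T r)) ⊆ τ)).card : ℝ)) (L : ℕ) :
    ∃ τ : Fin L → Set V, (∀ j, Ind0 E (τ j)) ∧ ((∀ v, ∃ j, v ∈ τ j) ∨
      (L : ℝ) * (β * (s : ℝ) ^ (Fintype.card R)) ≤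
        ((Finset.univ.filter (fun T : R → Fin n => ∃ j, (⋂ r, σ (T r)) ⊆ τ j)).card : ℝ)) := by
  induction L with
  | zero => exact ⟨fun j => j.elim0, fun j => j.elim0, Or.inr (by simp)⟩
  | succ L ih =>
    obtain ⟨τ, hτ, h⟩ := ih
    by_cases hc : ∀ v, ∃ j, v ∈ τ j
    · refine ⟨Fin.cons ∅ τ, ?_, Or.inl ?_⟩
      · intro j
        refine Fin.cases ?_ (fun j => ?_) j
        · intro e he hsub
          obtain ⟨x, hx⟩ := hEn e he
          exact (hsub hx : x ∈ (∅ : Set V))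
        · simpa using hτ j
      · intro v
        obtain ⟨j, hj⟩ := hc v
        exact ⟨j.succ, by simpa using hj⟩
    · replace h := h.resolve_left hc
      push Not at hc
      obtain ⟨v, hv⟩ := hc
      have hcard : s ≤ Fintype.card {i // v ∈ σ i} := by
        rw [Fintype.card_subtype]; exact hcov v
      have : Nonempty {i // v ∈ σ i} := Fintype.card_pos_iff.1 (hs.trans_le hcard)
      obtain ⟨t, ht, hcnt⟩ := H {i // v ∈ σ i} (fun i => σ i.1) (fun i => hσ i.1)
      refine ⟨Fin.cons t τ, ?_, Or.inr ?_⟩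
      · intro j
        refine Fin.cases ?_ (fun j => ?_) j
        · simpa using ht
        · simpa using hτ j
      set A := Finset.univ.filter (fun T : R → Fin n => ∃ j, (⋂ r, σ (T r)) ⊆ τ j) with hA
      set B := Finset.univ.filter (fun T : R → {i // v ∈ σ i} => (⋂ r, σ (T r).1) ⊆ t) with hB
      have hinj : Function.Injective (fun (T : R → {i // v ∈ σ i}) (r : R) => (T r).1) := by
        intro T T' hTT
        funext r
        exact Subtype.ext (congrFun hTT r)
      have hdis : Disjoint A (B.image (fun T r => (T r).1)) := by
        rw [Finset.disjoint_left]
        intro T hT hT'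
        obtain ⟨T', -, rfl⟩ := Finset.mem_image.1 hT'
        obtain ⟨j, hj⟩ := (Finset.mem_filter.1 hT).2
        exact hv j (hj (Set.mem_iInter.2 fun r => (T' r).2))
      have hle : (A ∪ (B.image (fun T r => (T r).1))).card ≤
          (Finset.univ.filter (fun T : R → Fin n => ∃ j, (⋂ r, σ (T r)) ⊆
            (Fin.cons t τ : Fin (L + 1) → Set V) j)).card := by
        apply Finset.card_le_card
        intro T hT
        refine Finset.mem_filter.2 ⟨Finset.mem_univ _, ?_⟩
        rcases Finset.mem_union.1 hT with hT | hT
        · obtain ⟨j, hj⟩ := (Finset.mem_filter.1 hT).2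
          exact ⟨j.succ, by simpa using hj⟩
        · obtain ⟨T', hT', rfl⟩ := Finset.mem_image.1 hT
          exact ⟨0, by simpa using (Finset.mem_filter.1 hT').2⟩
      rw [Finset.card_union_of_disjoint hdis, Finset.card_image_of_injective _ hinj] at hle
      have hle' := (Nat.cast_le (α := ℝ)).2 hle
      rw [Nat.cast_add] at hle'
      refine le_trans ?_ hle'
      have h3 : (s : ℝ) ^ (Fintype.card R) ≤ (Fintype.card {i // v ∈ σ i} : ℝ) ^ (Fintype.card R) := by
        gcongr
      have h4 := mul_le_mul_of_nonneg_left h3 hβ.le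
      push_cast
      linarith

theorem greedy_fin {V R : Type*} [Fintype R] [DecidableEq R] {E : Finset (Finset V)} {β : ℝ} (hβ : 0 < β)
    (hEn : ∀ e ∈ E, e.Nonempty) {p s : ℕ} (hs : 0 < s)
    (σ : Fin (p * s) → Set V) (hσ : ∀ i, Ind0 E (σ i))
    (hcov : ∀ v, s ≤ (Finset.univ.filter (fun i => v ∈ σ i)).card)
    (H : ∀ (Y : Type) [Fintype Y] [Nonempty Y] (σ : Y → Set V), (∀ y, Ind0 E (σ y)) →
      ∃ τ : Set V, Ind0 E τ ∧ β * (Fintype.card Y : ℝ) ^ (Fintype.card R) ≤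
      ((Finset.univ.filter (fun T : R → Y => (⋂ r, σ (T r)) ⊆ τ)).card : ℝ)) (L : ℕ)
    (hL : (p : ℝ) ^ (Fintype.card R) < L * β) :
    ∃ τ : Fin L → Set V, (∀ j, Ind0 E (τ j)) ∧ (∀ v, ∃ j, v ∈ τ j) := by
  obtain ⟨τ, hτ, h | h⟩ := greedy_aux hβ hEn hs σ hσ hcov H L
  · exact ⟨τ, hτ, h⟩
  · exfalso
    have h1 := h.trans (Nat.cast_le.2 (Finset.card_le_univ _))
    rw [Fintype.card_fun, Fintype.card_fin] at h1
    push_cast at h1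
    rw [mul_pow, ← mul_assoc] at h1
    have hs' : (0 : ℝ) < (s : ℝ) ^ (Fintype.card R) := by positivity
    have h2 := le_of_mul_le_mul_right h1 hs'
    linarith

theorem main_aux (m k w : ℕ) (hk : 2 ≤ k) (hkm : k ≤ m) :
    ∃ L : ℕ, ∀ (V : Type u) [Fintype V] [DecidableEq V] (E : Finset (Finset V)),
      (∀ e ∈ E, e.card = k) → E.Nonempty → PropT E k m →
      CliqueNumLE E k w → ChromaticLE E L := by
  obtain ⟨m', rfl⟩ : ∃ m', m = m' + 1 := ⟨m - 1, by omega⟩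
  obtain ⟨δ, hδ, Hδ⟩ := density_aux.{u, u} (m' + 1) k w hk
  obtain ⟨β, hβ, Hβ⟩ := fracHelly (m' + 1) (Nat.succ_pos _) δ hδ
  obtain ⟨p, hp, Hp⟩ := mwu β hβ
  obtain ⟨β', hβ', Hs⟩ := selection m'
  obtain ⟨L, hL⟩ := exists_nat_gt ((p : ℝ) ^ (Fintype.card (Fin m' → Fin (m' + 1))) / β')
  rw [div_lt_iff₀ hβ'] at hL
  refine ⟨L, ?_⟩
  intro V _ _ E hE hne hT hQ
  have hEn : ∀ e ∈ E, e.Nonempty := fun e he => Finset.card_pos.1 (by rw [hE e he]; omega)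
  have hEm : ∀ e ∈ E, e.card ≤ m' + 1 := fun e he => by rw [hE e he]; exact hkm
  have hC : Col E (m' + 1) := col_of_propT (Nat.succ_pos _) hT
  obtain ⟨e0, he0⟩ := hne
  obtain ⟨x0, -⟩ := hEn e0 he0
  have : Nonempty V := ⟨x0⟩
  obtain ⟨s, σ, hs, hσ, hcov⟩ := Hp V E (weights_aux (by
    intro wt hw
    have : Nonempty (Σ v, Fin (wt v)) := by
      rw [← Fintype.card_pos_iff]; simpa using hw
    exact Hβ V E hEm hEn hC (Σ v, Fin (wt v)) (fun i => {i.1})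
      (Hδ V E hE hQ (Σ v, Fin (wt v)) Sigma.fst)))
  obtain ⟨τ, hτ, h⟩ := greedy_fin (R := Fin m' → Fin (m' + 1)) hβ' hEn hs σ hσ hcov
    (fun Y _ _ σ hσ => Hs V E hEm hEn hC Y σ hσ) L hL
  · choose j hj using h
    refine ⟨fun i => {v | j v = i}, fun v => ⟨j v, rfl, fun i hi => hi.symm⟩, ?_⟩
    intro i _ e he hsub
    exact hτ i e he (fun v hv => by
      have : j v = i := hsub hv
      rw [← this]; exact hj v)

/-- The class `H_k(m)` of `k`-uniform hypergraphs with property `T_k(m)` is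
χ-bounded: there is `f` with `χ(H) ≤ f (ω(H))` for all such hypergraphs. -/
theorem Hkm_chi_bounded (m k : ℕ) (hk : 2 ≤ k) (hkm : k ≤ m) :
    ∃ f : ℕ → ℕ, ∀ (V : Type u) [Fintype V] [DecidableEq V] (E : Finset (Finset V)),
      (∀ e ∈ E, e.card = k) → E.Nonempty → PropT E k m →
      ∀ w : ℕ, CliqueNumLE E k w → ChromaticLE E (f w) := by
  choose f hf using fun w => main_aux.{u} m k w hk hkm
  exact ⟨f, fun V _ _ E hE hne hT w hQ => hf w V E hE hne hT hQ⟩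
end

section
/- Let m ≥ k ≥ 2 be integers. If a finite k-uniform hypergraph H with at least one edge has property T_k(m), then the Radon number of its associated convexity space satisfies r(X, C)_H ≤ binom(m, k) · 2^k; that is, every subset of X of size binom(m, k) · 2^k admits a Radon partition. -/
open scoped Classical

universe u

theorem radon_aux {V : Type u} [Fintype V] [DecidableEq V] (E : Finset (Finset V))
    (Y : Finset (MIS E)) (hY : ¬ HasRadonPartition (assocC E) Y) (P : MIS E → Prop) :
    ∃ e ∈ E, ∀ v ∈ e, (∀ σ ∈ Y, P σ → v ∈ σ.1) ∨ (∀ σ ∈ Y, ¬ P σ → v ∈ σ.1) := by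
  by_contra hcon
  apply hY
  let I : Set V := {v | (∀ σ ∈ Y, P σ → v ∈ σ.1) ∨ (∀ σ ∈ Y, ¬ P σ → v ∈ σ.1)}
  have hI : IsIndep E I := fun e he hsub => hcon ⟨e, he, fun v hv => hsub hv⟩
  obtain ⟨M, hIM, hM⟩ := (Set.toFinite {J : Set V | IsIndep E J}).exists_le_maximal hI
  have hMM : IsMaxIndep E M :=
    ⟨hM.1, fun J hJ hMJ => Set.Subset.antisymm (hM.2 hJ hMJ) hMJ⟩
  refine ⟨Y.filter P, Y.filter (fun σ => ¬ P σ), ?_, ?_, ⟨⟨M, hMM⟩, ?_, ?_⟩⟩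
  · rw [← Finset.coe_union, Finset.filter_union_filter_not_eq]
  · rw [Finset.disjoint_coe]
    exact Finset.disjoint_filter_filter_not Y Y P
  · rintro K ⟨⟨W, rfl⟩, hW⟩
    intro w hw
    refine hIM (Or.inl fun σ hσ hp => ?_)
    exact hW (Finset.mem_coe.2 (Finset.mem_filter.2 ⟨hσ, hp⟩)) hw
  · rintro K ⟨⟨W, rfl⟩, hW⟩
    intro w hw
    refine hIM (Or.inr fun σ hσ hp => ?_)
    exact hW (Finset.mem_coe.2 (Finset.mem_filter.2 ⟨hσ, hp⟩)) hw

/-- If a `k`-uniform hypergraph has property `T_k(m)`, then the Radon number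
of its associated convexity space is at most `binom(m,k) * 2 ^ k`: every subset of that size
admits a Radon partition. -/
theorem radon_bound_of_propT {V : Type u} [Fintype V] [DecidableEq V] (m k : ℕ)
    (hk : 2 ≤ k) (hkm : k ≤ m) (E : Finset (Finset V))
    (hunif : ∀ e ∈ E, e.card = k) (hne : E.Nonempty) (hT : PropT E k m) :
    ∀ Y : Finset (MIS E), Y.card = m.choose k * 2 ^ k →
      HasRadonPartition (assocC E) Y := by
  intro Y hcard
  by_contra hY
  let Q : Finset ((_ : Finset (Fin m)) × Finset (Fin m)) :=
    (Finset.powersetCard k (Finset.univ : Finset (Fin m))).sigma (fun S => S.powerset)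
  have hQ : Q.card = m.choose k * 2 ^ k := by
    rw [Finset.card_sigma, Finset.sum_congr rfl (g := fun _ => 2 ^ k)]
    · simp
    · intro S hS
      rw [Finset.card_powerset, (Finset.mem_powersetCard.1 hS).2]
  let φ : Y ≃ Q := Finset.equivOfCardEq (hcard.trans hQ.symm)
  have h := fun i : Fin m => radon_aux E Y hY
    (fun σ => ∃ hσ : σ ∈ Y, i ∈ (φ ⟨σ, hσ⟩).1.2)
  choose e heE he using h
  obtain ⟨g, v, hg, hv, hve, hvE⟩ := hT e heE
  let T : Finset (Fin m) := (Finset.univ.filter (fun j : Fin k =>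
    ∀ σ ∈ Y, (∃ hσ : σ ∈ Y, g j ∈ (φ ⟨σ, hσ⟩).1.2) → v j ∈ σ.1)).image g
  have hmem : (⟨Finset.univ.image g, T⟩ : (_ : Finset (Fin m)) × Finset (Fin m)) ∈ Q := by
    refine Finset.mem_sigma.2 ⟨Finset.mem_powersetCard.2 ⟨Finset.subset_univ _, ?_⟩, ?_⟩
    · rw [Finset.card_image_of_injective _ hg.injective]; simp
    · exact Finset.mem_powerset.2 (Finset.image_subset_image (Finset.filter_subset _ _))
  obtain ⟨⟨σ, hσ⟩, hφ⟩ := φ.surjective ⟨_, hmem⟩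
  refine σ.2.1 _ hvE ?_
  intro w hw
  obtain ⟨j, -, rfl⟩ := Finset.mem_image.1 (Finset.mem_coe.1 hw)
  by_cases hj : ∀ σ ∈ Y, (∃ hσ : σ ∈ Y, g j ∈ (φ ⟨σ, hσ⟩).1.2) → v j ∈ σ.1
  · refine hj σ hσ ⟨hσ, ?_⟩
    rw [hφ]
    exact Finset.mem_image.2 ⟨j, Finset.mem_filter.2 ⟨Finset.mem_univ _, hj⟩, rfl⟩
  · refine ((he (g j) (v j) (hve j)).resolve_left hj) σ hσ ?_
    rintro ⟨hσ', h⟩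
    rw [hφ] at h
    obtain ⟨j', hj', hjj⟩ := Finset.mem_image.1 h
    obtain rfl := hg.injective hjj
    exact hj (Finset.mem_filter.1 hj').2
end

section
/- Let m, k, N be integers with m ≥ k ≥ 2 and N ≥ binom(m, k) · 2^k. Then there exists a family of pairs of sets (A_1, B_1), …, (A_m, B_m) such that: (i) for every 1 ≤ i ≤ m, A_i and B_i are nonempty, disjoint, and A_i ∪ B_i = {1, …, N}; and (ii) for every choice of indices 1 ≤ i_1 < i_2 < ⋯ < i_k ≤ m and every choice of sets W_1 ∈ {A_{i_1}, B_{i_1}}, W_2 ∈ {A_{i_2}, B_{i_2}}, …, W_k ∈ {A_{i_k}, B_{i_k}}, the intersection W_1 ∩ W_2 ∩ ⋯ ∩ W_k is nonempty. -/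
open scoped Classical

universe u

/-- For `m ≥ k ≥ 2` and `N ≥ binom(m,k) * 2 ^ k` there are partitions
`(A_i, B_i)` of `{1,…,N}` (into nonempty disjoint parts) such that for every `k` indices
`i_1 < ⋯ < i_k` and every choice `W_j ∈ {A_{i_j}, B_{i_j}}`, the `W_j` have a common
element. -/
theorem set_pairs_construction (m k N : ℕ) (hk : 2 ≤ k) (hkm : k ≤ m)
    (hN : m.choose k * 2 ^ k ≤ N) :
    ∃ A B : Fin m → Finset (Fin N),
      (∀ i, (A i).Nonempty ∧ (B i).Nonempty ∧ Disjoint (A i) (B i) ∧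
        A i ∪ B i = Finset.univ) ∧
      ∀ g : Fin k → Fin m, StrictMono g → ∀ W : Fin k → Finset (Fin N),
        (∀ j, W j = A (g j) ∨ W j = B (g j)) →
        (⋂ j, (↑(W j) : Set (Fin N))).Nonempty := by
  obtain ⟨f, hf⟩ : ∃ f : Fin N → Finset (Fin m),
      ∀ s t : Finset (Fin m), s.card = k → t ⊆ s → ∃ x, f x = t := by
    let P := Finset.sigma (Finset.powersetCard k (Finset.univ : Finset (Fin m)))
      (fun s => s.powerset)
    have hP : P.card = m.choose k * 2 ^ k := by
      rw [Finset.card_sigma, Finset.sum_congr rfl (g := fun _ => 2 ^ k)]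
      · simp
      · intro s hs
        rw [Finset.card_powerset, (Finset.mem_powersetCard.1 hs).2]
    obtain ⟨e⟩ : Nonempty (P ↪ Fin N) := by
      apply Function.Embedding.nonempty_of_card_le
      rw [Fintype.card_coe, Fintype.card_fin, hP]
      exact hN
    refine ⟨Function.extend e (fun p => p.1.2) (fun _ => ∅), ?_⟩
    intro s t hs hts
    refine ⟨e ⟨⟨s, t⟩, ?_⟩, ?_⟩
    · simp [P, Finset.mem_powersetCard, hs, hts]
    · rw [e.injective.extend_apply]
  refine ⟨fun i => Finset.univ.filter (fun x => i ∈ f x),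
    fun i => Finset.univ.filter (fun x => i ∉ f x), ?_, ?_⟩
  · intro i
    obtain ⟨s, his, -, hs⟩ := Finset.exists_subsuperset_card_eq
      (Finset.subset_univ ({i} : Finset (Fin m))) (n := k) (by simp; omega) (by simpa using hkm)
    refine ⟨?_, ?_, Finset.disjoint_filter_filter_not _ _ _, Finset.filter_union_filter_not_eq _ _⟩
    · obtain ⟨x, hx⟩ := hf s s hs subset_rfl
      exact ⟨x, by simpa [hx] using his⟩
    · obtain ⟨x, hx⟩ := hf s ∅ hs (by simp)
      exact ⟨x, by simp [hx]⟩
  · intro g hg W hW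
    obtain ⟨x, hx⟩ := hf (Finset.univ.image g)
      ((Finset.univ.filter
        (fun j => W j = Finset.univ.filter (fun x => g j ∈ f x))).image g)
      (by rw [Finset.card_image_of_injective _ hg.injective]; simp)
      (Finset.image_subset_image (Finset.filter_subset _ _))
    refine ⟨x, Set.mem_iInter.2 fun j => ?_⟩
    have key : g j ∈ f x ↔ W j = Finset.univ.filter (fun x => g j ∈ f x) := by
      conv_lhs => rw [hx]
      rw [Finset.mem_image]
      constructor
      · rintro ⟨a, ha, hab⟩
        obtain rfl := hg.injective hab
        exact (Finset.mem_filter.1 ha).2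
      · intro h
        exact ⟨j, by simpa using h, rfl⟩
    by_cases h : W j = Finset.univ.filter (fun x => g j ∈ f x)
    · have := key.2 h
      rw [h]; simpa using this
    · have h2 := (hW j).resolve_left h
      have := mt key.1 h
      rw [h2]; simpa using this
end

section
/- Let k ≥ 2 and r ≥ 1 be integers and let H be the k-uniform hypergraph consisting of 2^r − 1 pairwise disjoint edges (a matching of size 2^r − 1). Then the Radon number of its associated convexity space satisfies r(X, C)_H ≥ r + k; that is, there exists a subset of X of size r + k − 1 with no Radon partition. -/
open scoped Classical

universe u

theorem col_aux {V : Type u} [DecidableEq V] (k r : ℕ)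
    (hk : 2 ≤ k) (hr : 1 ≤ r) (E : Finset (Finset V))
    (hunif : ∀ e ∈ E, e.card = k) (hcard : E.card = 2 ^ r - 1) :
    ∃ c : Finset V → (Fin r ⊕ Fin (k - 1)) → V, (∀ e ∈ E, ∀ p, c e p ∈ e) ∧
      ∀ A : Set (Fin r ⊕ Fin (k - 1)), ∃ e ∈ E, ∀ p ∈ A, ∀ q, q ∉ A → c e p ≠ c e q := by
  have h1 : Fintype.card E = Fintype.card {S : Finset (Fin r) // S ≠ ∅} := by
    rw [Fintype.card_coe, hcard, Fintype.card_subtype_compl]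
    simp
  let φ := Fintype.equivOfCardEq h1
  have h2 : ∀ e : E, Nonempty (Option (Fin (k - 1)) ≃ (e : Finset V)) := by
    intro e
    refine ⟨Fintype.equivOfCardEq ?_⟩
    rw [Fintype.card_coe, hunif e e.2]
    simp
    omega
  let ψ := fun e => Classical.choice (h2 e)
  have z : Fin (k - 1) := ⟨0, by omega⟩
  let col : Finset (Fin r) → (Fin r ⊕ Fin (k - 1)) → Option (Fin (k - 1)) := fun S p =>
    Sum.elim (fun i => if i ∈ S then none else some z) (fun j => some j) p
  have hcol : ∀ A : Set (Fin r ⊕ Fin (k - 1)), Sum.inr z ∈ A →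
      ∃ S : Finset (Fin r), S ≠ ∅ ∧ ∀ p ∈ A, ∀ q, q ∉ A → col S p ≠ col S q := by
    intro A hz
    by_cases hS : (Finset.univ.filter (fun i : Fin r => Sum.inl i ∉ A)) = ∅
    · refine ⟨Finset.univ, ?_, ?_⟩
      · have : Nonempty (Fin r) := ⟨⟨0, hr⟩⟩
        exact Finset.univ_nonempty.ne_empty
      · have hA : ∀ i : Fin r, Sum.inl i ∈ A := by
          intro i
          by_contra h
          have : i ∈ (Finset.univ.filter (fun i : Fin r => Sum.inl i ∉ A)) := by simp [h]
          rw [hS] at this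
          simp at this
        rintro (i | i) hp (j | j) hq
        · exact absurd (hA j) hq
        · simp [col]
        · exact absurd (hA j) hq
        · simp only [col, Sum.elim_inr, ne_eq, Option.some.injEq]
          rintro rfl
          exact hq hp
    · refine ⟨_, hS, ?_⟩
      rintro (i | i) hp (j | j) hq
      · simp [col, hp, hq]
      · simp only [col, Sum.elim_inl, Sum.elim_inr]
        simp only [Finset.mem_filter, hp, Finset.mem_univ, not_true_eq_false, and_false, if_false,
          ne_eq, Option.some.injEq]
        rintro rfl
        exact hq hz
      · simp [col, hq]
      · simp only [col, Sum.elim_inr, ne_eq, Option.some.injEq]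
        rintro rfl
        exact hq hp
  have hcol2 : ∀ A : Set (Fin r ⊕ Fin (k - 1)),
      ∃ S : Finset (Fin r), S ≠ ∅ ∧ ∀ p ∈ A, ∀ q, q ∉ A → col S p ≠ col S q := by
    intro A
    by_cases hz : Sum.inr z ∈ A
    · exact hcol A hz
    · obtain ⟨S, h, h'⟩ := hcol Aᶜ hz
      exact ⟨S, h, fun p hp q hq => (h' q hq p (fun h => h hp)).symm⟩
  have hne : Nonempty V := by
    obtain ⟨S, h, -⟩ := hcol2 ∅
    exact ⟨(ψ (φ.symm ⟨S, h⟩) none).1⟩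
  refine ⟨fun e p => if h : e ∈ E then (ψ ⟨e, h⟩ (col (φ ⟨e, h⟩).1 p)).1
    else Classical.choice hne, ?_, ?_⟩
  · intro e he p
    simp only [he, dite_true]
    exact Subtype.property _
  · intro A
    obtain ⟨S, h, h'⟩ := hcol2 A
    refine ⟨(φ.symm ⟨S, h⟩).1, (φ.symm ⟨S, h⟩).2, ?_⟩
    intro p hp q hq heq
    simp only [Subtype.coe_eta, Finset.coe_mem, dite_true, Equiv.apply_symm_apply] at heq
    exact h' p hp q hq ((ψ _).injective (Subtype.ext heq))

/-- If `H` is a `k`-uniform matching of size `2 ^ r - 1`, then the Radon number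
of its associated convexity space is at least `r + k`: some subset of size `r + k - 1`
admits no Radon partition. -/
theorem matching_radon_lower_bound {V : Type u} [Fintype V] [DecidableEq V] (k r : ℕ)
    (hk : 2 ≤ k) (hr : 1 ≤ r) (E : Finset (Finset V))
    (hunif : ∀ e ∈ E, e.card = k) (hcard : E.card = 2 ^ r - 1)
    (hdisj : ∀ e ∈ E, ∀ e' ∈ E, e ≠ e' → Disjoint e e')
    (hcover : ∀ v : V, ∃ e ∈ E, v ∈ e) :
    ∃ Y : Finset (MIS E), Y.card = r + k - 1 ∧ ¬ HasRadonPartition (assocC E) Y := by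
  obtain ⟨c, hc, hsep⟩ := col_aux k r hk hr E hunif hcard
  have huniq : ∀ e ∈ E, ∀ e' ∈ E, ∀ w, w ∈ e → w ∈ e' → e = e' := by
    intro e he e' he' w h h'
    by_contra hne
    exact Finset.disjoint_left.1 (hdisj e he e' he' hne) h h'
  have hmax : ∀ p, IsMaxIndep E {v | ∀ e ∈ E, v ≠ c e p} := by
    intro p
    refine ⟨fun e he hs => hs (hc e he p) e he rfl, ?_⟩
    intro J hJ hsub
    refine Set.Subset.antisymm ?_ hsub
    intro v hv e he hve
    refine hJ e he ?_
    intro w hw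
    by_cases hwv : w = v
    · rw [hwv]; exact hv
    · apply hsub
      intro e' he' hwe
      have : e = e' := huniq e he e' he' w hw (hwe ▸ hc e' he' p)
      subst this
      exact hwv (hwe.trans hve.symm)
  let σ : (Fin r ⊕ Fin (k - 1)) → MIS E := fun p => ⟨_, hmax p⟩
  have hmem : ∀ p, ∀ e ∈ E, ∀ w ∈ e, w ∉ (σ p).1 → w = c e p := by
    intro p e he w hw hn
    simp only [σ, Set.mem_setOf_eq, not_forall, not_not] at hn
    obtain ⟨e', he', h⟩ := hn
    have : e = e' := huniq e he e' he' w hw (h ▸ hc e' he' p)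
    subst this
    exact h
  have hinj : Function.Injective σ := by
    intro p q hpq
    by_contra hne
    obtain ⟨e, he, h⟩ := hsep {p}
    refine h p rfl q (fun h => hne h.symm) ?_
    apply hmem q e he _ (hc e he p)
    rw [← hpq]
    exact fun h => h e he rfl
  have hhull : ∀ (A : Finset (MIS E)) (τ : MIS E), τ ∈ convHull (assocC E) ↑A →
      ∀ w, w ∉ τ.1 → ∃ a ∈ A, w ∉ a.1 := by
    intro A τ hτ w hw
    by_contra hcon
    push Not at hcon
    have := hτ (SW E {w}) ⟨⟨_, rfl⟩, fun a ha => by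
      simpa [SW] using hcon a ha⟩
    exact hw (by simpa [SW] using this)
  refine ⟨Finset.univ.image σ, ?_, ?_⟩
  · rw [Finset.card_image_of_injective _ hinj]
    simp
    omega
  · rintro ⟨A, B, hAB, hd, τ, hτA, hτB⟩
    obtain ⟨e, he, h⟩ := hsep {p | σ p ∈ A}
    obtain ⟨w, hwe, hw⟩ := Set.not_subset.1 (τ.2.1 e he)
    obtain ⟨a, ha, hwa⟩ := hhull A τ hτA w hw
    obtain ⟨b, hb, hwb⟩ := hhull B τ hτB w hw
    have ha' : a ∈ (↑(Finset.univ.image σ) : Set (MIS E)) := hAB ▸ Or.inl ha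
    have hb' : b ∈ (↑(Finset.univ.image σ) : Set (MIS E)) := hAB ▸ Or.inr hb
    simp only [Finset.coe_image, Finset.coe_univ, Set.image_univ, Set.mem_range] at ha' hb'
    obtain ⟨p, rfl⟩ := ha'
    obtain ⟨q, rfl⟩ := hb'
    exact h p ha q (fun hq => Set.disjoint_left.1 hd hq hb)
      ((hmem p e he w hwe hwa).symm.trans (hmem q e he w hwe hwb))
end

section
/- For all integers m ≥ k ≥ 2 there exists an integer t = t(k, m) such that every finite k-uniform hypergraph with at least one edge having property δ_k(m) has property T_k(t); consequently, there exists a function f : ℕ → ℕ such that every finite k-uniform hypergraph H with at least one edge having property δ_k(m) satisfies χ(H) ≤ f(ω(H)), i.e., the class Δ_k(m) is χ-bounded. -/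
open scoped Classical

universe u

theorem aux_sunflower (m : ℕ) (k : ℕ) : ∃ B : ℕ, ∀ (V : Type u) [DecidableEq V]
    (F : Finset (Finset V)), (∀ e ∈ F, e.card = k) → B ≤ F.card →
    ∃ G ⊆ F, G.card = m ∧ ∃ S : Finset V, ∀ e ∈ G, ∀ e' ∈ G, e ≠ e' → e ∩ e' = S := by
  induction k with
  | zero =>
    refine ⟨2, fun V _ F hF hB => ?_⟩
    exfalso
    have : F ⊆ {∅} := by
      intro e he
      simpa using hF e he
    have := Finset.card_le_card this
    simp at this
    omega
  | succ k ih =>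
    obtain ⟨B, hB⟩ := ih
    refine ⟨m * (k + 1) * B + 1, fun V _ F hF hc => ?_⟩
    let P : Finset (Finset (Finset V)) :=
      F.powerset.filter (fun D => ∀ e ∈ D, ∀ e' ∈ D, e ≠ e' → e ∩ e' = ∅)
    have hP : P.Nonempty := ⟨∅, by simp [P]⟩
    obtain ⟨D, hD, hmax⟩ := Finset.exists_max_image P Finset.card hP
    have hD' : D ⊆ F ∧ ∀ e ∈ D, ∀ e' ∈ D, e ≠ e' → e ∩ e' = ∅ := by simpa [P] using hD
    by_cases hm : m ≤ D.card
    · obtain ⟨G, hG, hGc⟩ := Finset.exists_subset_card_eq hm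
      exact ⟨G, hG.trans hD'.1, hGc, ∅, fun e he e' he' => hD'.2 e (hG he) e' (hG he')⟩
    push Not at hm
    let U : Finset V := D.biUnion id
    have hU : U.card ≤ m * (k + 1) := by
      calc U.card ≤ D.card * (k + 1) :=
            Finset.card_biUnion_le_card_mul _ _ _ (fun e he => (hF e (hD'.1 he)).le)
        _ ≤ m * (k + 1) := by gcongr
    have hmeet : ∀ e ∈ F, ∃ x ∈ U, x ∈ e := by
      intro e he
      by_contra hcon
      push Not at hcon
      have hdis : ∀ d ∈ D, e ∩ d = ∅ := by
        intro d hd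
        ext x
        simp only [Finset.mem_inter, Finset.notMem_empty, iff_false, not_and]
        intro hx hxd
        exact hcon x (Finset.mem_biUnion.2 ⟨d, hd, hxd⟩) hx
      have hne : e ∉ D := by
        intro hed
        have h1 := hdis e hed
        have h2 := hF e he
        rw [Finset.inter_self] at h1
        simp [h1] at h2
      have hins : insert e D ∈ P := by
        simp only [P, Finset.mem_filter, Finset.mem_powerset]
        refine ⟨Finset.insert_subset he hD'.1, ?_⟩
        intro a ha b hb hab
        rcases Finset.mem_insert.1 ha with h1 | h1 <;> rcases Finset.mem_insert.1 hb with h2 | h2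
        · exact absurd (h1.trans h2.symm) hab
        · rw [h1]; exact hdis b h2
        · rw [h2, Finset.inter_comm]; exact hdis a h1
        · exact hD'.2 a h1 b h2 hab
      have := hmax _ hins
      rw [Finset.card_insert_of_notMem hne] at this
      omega
    have hVne : Nonempty V := by
      obtain ⟨e, he⟩ : F.Nonempty := Finset.card_pos.1 (by omega)
      obtain ⟨x, -, -⟩ := hmeet e he
      exact ⟨x⟩
    choose! φ hφ using hmeet
    obtain ⟨x, hx, hxc⟩ := Finset.exists_lt_card_fiber_of_mul_lt_card_of_maps_to
      (s := F) (t := U) (f := φ) (n := B) (fun e he => (hφ e he).1)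
      (lt_of_le_of_lt (Nat.mul_le_mul_right B hU) hc)
    let F' := F.filter (fun e => φ e = x)
    have hxF : ∀ e ∈ F', x ∈ e := by
      intro e he
      simp only [F', Finset.mem_filter] at he
      rw [← he.2]; exact (hφ e he.1).2
    have hFF : F' ⊆ F := Finset.filter_subset _ _
    have hinj : Set.InjOn (fun e : Finset V => e.erase x) F' := by
      intro a ha b hb hab
      have := congrArg (insert x) hab
      simpa [Finset.insert_erase (hxF a ha), Finset.insert_erase (hxF b hb)] using this
    obtain ⟨G, hG, hGc, S, hS⟩ := hB V (F'.image (fun e => e.erase x)) (by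
        intro e he
        obtain ⟨a, ha, rfl⟩ := Finset.mem_image.1 he
        rw [Finset.card_erase_of_mem (hxF a ha), hF a (hFF ha)]; rfl) (by
        rw [Finset.card_image_of_injOn hinj]; exact hxc.le)
    have hxG : ∀ e ∈ G, x ∉ e := by
      intro e he
      obtain ⟨a, ha, rfl⟩ := Finset.mem_image.1 (hG he)
      simp
    refine ⟨G.image (insert x), ?_, ?_, insert x S, ?_⟩
    · intro e he
      obtain ⟨a, ha, rfl⟩ := Finset.mem_image.1 he
      obtain ⟨b, hb, rfl⟩ := Finset.mem_image.1 (hG ha)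
      rw [Finset.insert_erase (hxF b hb)]; exact hFF hb
    · rw [Finset.card_image_of_injOn, hGc]
      intro a ha b hb hab
      have := congrArg (fun e => Finset.erase e x) hab
      simpa [Finset.erase_insert (hxG a ha), Finset.erase_insert (hxG b hb)] using this
    · intro e he e' he' hne
      obtain ⟨a, ha, rfl⟩ := Finset.mem_image.1 he
      obtain ⟨b, hb, rfl⟩ := Finset.mem_image.1 he'
      rw [← Finset.insert_inter_distrib, hS a ha b hb (fun h => hne (by rw [h]))]

theorem aux_T (m k : ℕ) : ∃ t : ℕ, k ≤ t ∧ ∀ (V : Type u) [DecidableEq V]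
        (E : Finset (Finset V)), (∀ e ∈ E, e.card = k) →
        PropDelta E k m → PropT E k t := by
  obtain ⟨B, hB⟩ := aux_sunflower.{u} m k
  refine ⟨B * k + k + 1, by omega, fun V _ E hE hd e he => ?_⟩
  let t := B * k + k + 1
  -- sorting
  have key : ∀ (g : Fin k → Fin (B * k + k + 1)) (v : Fin k → V), Function.Injective g →
      Function.Injective v → (∀ j, v j ∈ e (g j)) → Finset.image v Finset.univ ∈ E →
      ∃ (g : Fin k → Fin (B * k + k + 1)) (v : Fin k → V), StrictMono g ∧ Function.Injective v ∧
      (∀ j, v j ∈ e (g j)) ∧ Finset.image v Finset.univ ∈ E := by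
    intro g v hg hv hve him
    refine ⟨g ∘ Tuple.sort g, v ∘ Tuple.sort g, ?_, ?_, ?_, ?_⟩
    · exact (Tuple.monotone_sort g).strictMono_of_injective (hg.comp (Equiv.injective _))
    · exact hv.comp (Equiv.injective _)
    · intro j; exact hve _
    · convert him using 1
      ext x
      simp only [Finset.mem_image, Finset.mem_univ, true_and, Function.comp]
      exact (Tuple.sort g).surjective.exists (p := fun j => v j = x) |>.symm
  by_cases hB' : B ≤ (Finset.univ.image e).card
  · obtain ⟨G, hG, hGc, hS⟩ := hB V (Finset.univ.image e) (by
      intro a ha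
      obtain ⟨i, -, rfl⟩ := Finset.mem_image.1 ha
      exact hE _ (he i)) hB'
    obtain ⟨f, v, hf, hfG, hv, hvf, him⟩ := hd G (by
      intro a ha
      obtain ⟨i, -, rfl⟩ := Finset.mem_image.1 (hG ha)
      exact he i) hGc hS
    have : ∀ j, ∃ i, e i = f j := fun j => by
      obtain ⟨i, -, h⟩ := Finset.mem_image.1 (hG (hfG j))
      exact ⟨i, h⟩
    choose g hg using this
    refine key g v ?_ hv (fun j => by rw [hg]; exact hvf j) him
    intro a b hab
    apply hf
    rw [← hg, ← hg, hab]
  · push Not at hB'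
    obtain ⟨x, hx, hxc⟩ := Finset.exists_lt_card_fiber_of_mul_lt_card_of_maps_to
      (s := (Finset.univ : Finset (Fin (B * k + k + 1)))) (t := Finset.univ.image e) (f := e) (n := k)
      (fun i _ => Finset.mem_image_of_mem _ (Finset.mem_univ i)) (by
        simp only [Finset.card_univ, Fintype.card_fin]
        have := Nat.mul_le_mul_right k hB'.le
        omega)
    obtain ⟨s, hs, hsc⟩ := Finset.exists_subset_card_eq hxc.le
    obtain ⟨i, -, hi⟩ := Finset.mem_image.1 hx
    have hxE : x ∈ E := hi ▸ he i
    let v := x.equivFinOfCardEq (hE x hxE)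
    let g := s.equivFinOfCardEq hsc
    refine key (fun j => (g.symm j : Fin _)) (fun j => (v.symm j : V)) ?_ ?_ ?_ ?_
    · exact Subtype.val_injective.comp g.symm.injective
    · exact Subtype.val_injective.comp v.symm.injective
    · intro j
      have := (Finset.mem_filter.1 (hs (g.symm j).2)).2
      rw [this]
      exact (v.symm j).2
    · convert hxE using 1
      ext y
      simp only [Finset.mem_image, Finset.mem_univ, true_and]
      constructor
      · rintro ⟨j, rfl⟩; exact (v.symm j).2
      · intro hy; exact ⟨v ⟨y, hy⟩, by simp⟩

theorem aux_ramsey (k : ℕ) : ∀ a b : ℕ, ∃ R : ℕ, ∀ (α : Type) (c : Finset α → Prop)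
    (X : Finset α), R ≤ X.card → ∃ S ⊆ X, (S.card = a ∧ ∀ s ⊆ S, s.card = k → c s) ∨
      (S.card = b ∧ ∀ s ⊆ S, s.card = k → ¬ c s) := by
  induction k with
  | zero =>
    intro a b
    refine ⟨a + b, fun α c X hX => ?_⟩
    by_cases h : c ∅
    · obtain ⟨S, hS, hc⟩ := Finset.exists_subset_card_eq (show a ≤ X.card by omega)
      exact ⟨S, hS, Or.inl ⟨hc, fun s _ h0 => by rw [Finset.card_eq_zero.1 h0]; exact h⟩⟩
    · obtain ⟨S, hS, hc⟩ := Finset.exists_subset_card_eq (show b ≤ X.card by omega)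
      exact ⟨S, hS, Or.inr ⟨hc, fun s _ h0 => by rw [Finset.card_eq_zero.1 h0]; exact h⟩⟩
  | succ k ih =>
    intro a
    induction a with
    | zero =>
      intro b
      refine ⟨0, fun α c X _ => ⟨∅, by simp, Or.inl ⟨rfl, fun s hs h => ?_⟩⟩⟩
      rw [Finset.subset_empty.1 hs] at h; simp at h
    | succ a iha =>
      intro b
      induction b with
      | zero =>
        refine ⟨0, fun α c X _ => ⟨∅, by simp, Or.inr ⟨rfl, fun s hs h => ?_⟩⟩⟩
        rw [Finset.subset_empty.1 hs] at h; simp at h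
      | succ b ihb =>
        obtain ⟨R1, h1⟩ := iha (b + 1)
        obtain ⟨R2, h2⟩ := ihb
        obtain ⟨R, hR⟩ := ih R1 R2
        refine ⟨R + 1, fun α c X hX => ?_⟩
        obtain ⟨x, hx⟩ : X.Nonempty := Finset.card_pos.1 (by omega)
        obtain ⟨Y, hY, hor⟩ := hR α (fun s => c (insert x s)) (X.erase x) (by
          rw [Finset.card_erase_of_mem hx]; omega)
        have hYX : Y ⊆ X := hY.trans (Finset.erase_subset _ _)
        have hxY : x ∉ Y := fun h => by simpa using hY h
        have ext : ∀ (S : Finset α) (p : Finset α → Prop), S ⊆ Y →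
            (∀ s ⊆ Y, s.card = k → p (insert x s)) →
            (∀ s ⊆ S, s.card = k + 1 → p s) → ∀ s ⊆ insert x S, s.card = k + 1 → p s := by
          intro S p hS hp hq s hs hsc
          by_cases hxs : x ∈ s
          · rw [← Finset.insert_erase hxs]
            apply hp
            · exact (Finset.subset_insert_iff.1 hs).trans hS
            · rw [Finset.card_erase_of_mem hxs, hsc]; rfl
          · exact hq s ((Finset.subset_insert_iff_of_notMem hxs).1 hs) hsc
        rcases hor with ⟨hYc, hYp⟩ | ⟨hYc, hYp⟩
        · obtain ⟨S, hS, ⟨hSc, hSp⟩ | hr⟩ := h1 α c Y hYc.ge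
          · refine ⟨insert x S, Finset.insert_subset hx (hS.trans hYX), Or.inl ⟨?_, ?_⟩⟩
            · rw [Finset.card_insert_of_notMem (fun h => hxY (hS h)), hSc]
            · exact ext S c hS hYp hSp
          · exact ⟨S, hS.trans hYX, Or.inr hr⟩
        · obtain ⟨S, hS, hr | ⟨hSc, hSp⟩⟩ := h2 α c Y hYc.ge
          · exact ⟨S, hS.trans hYX, Or.inl hr⟩
          · refine ⟨insert x S, Finset.insert_subset hx (hS.trans hYX), Or.inr ⟨?_, ?_⟩⟩
            · rw [Finset.card_insert_of_notMem (fun h => hxY (hS h)), hSc]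
            · exact ext S (fun s => ¬ c s) hS hYp hSp

/-- Working form of property `T`. -/
def TT {V : Type*} (E : Finset (Finset V)) (k m : ℕ) : Prop :=
  ∀ e : Fin m → Finset V, (∀ i, e i ∈ E) →
    ∃ (a : Fin k → Fin m) (v : Fin k → V), Function.Injective a ∧ (∀ j, v j ∈ e (a j)) ∧
      ∃ e' ∈ E, ∀ x ∈ e', ∃ j, v j = x

/-- A tuple of sets whose union contains an edge. -/
def BadT {V ι : Type*} {k : ℕ} (E : Finset (Finset V)) (W : ι → Set V) (y : Fin k → ι) : Prop :=
  ¬ IsIndep E (⋃ i, W (y i))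

theorem aux_TT {V : Type*} [DecidableEq V] {E : Finset (Finset V)} {k m : ℕ} (h : PropT E k m) :
    TT E k m := by
  intro e he
  obtain ⟨g, v, hg, -, hv, him⟩ := h e he
  refine ⟨g, v, hg.injective, hv, _, him, fun x hx => ?_⟩
  simpa using hx

theorem aux_indep_mono {V : Type*} {E : Finset (Finset V)} {A B : Set V} (h : A ⊆ B)
    (hB : IsIndep E B) : IsIndep E A := fun e he hs => hB e he (hs.trans h)

theorem aux_core {V ι : Type*} {E : Finset (Finset V)} {k k' m : ℕ} (hT : TT E k m)
    (W : ι → Set V) (g : Fin m → Fin k' → ι) (hg : ∀ i, BadT E W (g i)) :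
    ∃ (a : Fin k → Fin m) (c : Fin k → Fin k'), Function.Injective a ∧
      BadT E W (fun j => g (a j) (c j)) := by
  have : ∀ i, ∃ e ∈ E, (↑e : Set V) ⊆ ⋃ j, W (g i j) := by
    intro i
    have := hg i
    unfold BadT IsIndep at this
    push Not at this
    exact this
  choose e he hes using this
  obtain ⟨a, v, ha, hv, e', he', hx⟩ := hT e he
  have : ∀ j, ∃ c, v j ∈ W (g (a j) c) := fun j => by
    simpa using hes (a j) (hv j)
  choose c hc using this
  refine ⟨a, c, ha, fun h => h e' he' ?_⟩
  intro x hxe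
  obtain ⟨j, rfl⟩ := hx x hxe
  exact Set.mem_iUnion.2 ⟨j, hc j⟩

theorem aux_bad_of {V ι : Type*} {E : Finset (Finset V)} {k : ℕ} (hE : ∀ e ∈ E, e.card = k)
    (W : ι → Set V) (Z : Finset ι) (h : ¬ IsIndep E (⋃ i ∈ Z, W i)) :
    ∃ y : Fin k → ι, (∀ j, y j ∈ Z) ∧ BadT E W y := by
  unfold IsIndep at h
  push Not at h
  obtain ⟨e, he, hs⟩ := h
  let v := e.equivFinOfCardEq (hE e he)
  have : ∀ j, ∃ i ∈ Z, ((v.symm j : e) : V) ∈ W i := fun j => by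
    simpa using hs (v.symm j).2
  choose y hy hyW using this
  refine ⟨y, hy, fun h => h e he ?_⟩
  intro x hx
  refine Set.mem_iUnion.2 ⟨v ⟨x, hx⟩, ?_⟩
  simpa using hyW (v ⟨x, hx⟩)

theorem aux_fiber {J K T : Type*} [Fintype J] [Fintype K] [Fintype T]
    (a : K → J) (ha : Function.Injective a) (P : (K → T) → Prop) :
    (Finset.univ.filter (fun f : J → T => P (f ∘ a))).card * Fintype.card T ^ Fintype.card K =
      Fintype.card T ^ Fintype.card J * (Finset.univ.filter (fun g : K → T => P g)).card := by
  have h : (Finset.univ.filter (fun f : J → T => P (f ∘ a)) ×ˢ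
      (Finset.univ : Finset (K → T))).card =
      ((Finset.univ : Finset (J → T)) ×ˢ Finset.univ.filter (fun g : K → T => P g)).card := by
    have e1 : ∀ (f : J → T) (g : K → T), Function.extend a g f ∘ a = g := fun f g => by
      funext x; simp [ha.extend_apply]
    have e2 : ∀ (f : J → T) (g : K → T),
        Function.extend a (f ∘ a) (Function.extend a g f) = f := fun f g => by
      funext x
      by_cases hx : ∃ y, a y = x
      · obtain ⟨y, rfl⟩ := hx
        simp [ha.extend_apply]
      · simp [Function.extend_apply' _ _ _ hx]
    refine Finset.card_nbij' (fun p => (Function.extend a p.2 p.1, p.1 ∘ a))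
      (fun p => (Function.extend a p.2 p.1, p.1 ∘ a)) ?_ ?_ ?_ ?_
    · intro p hp
      simp at hp ⊢
      exact hp
    · intro p hp
      simp [e1] at hp ⊢
      exact hp
    · intro p _
      simp [e1, e2]
    · intro p _
      simp [e1, e2]
  simpa [Finset.card_product] using h

theorem aux_upd {J Y : Type*} [Fintype J] [Fintype Y] [DecidableEq J] (j : J)
    (P : (J → Y) → Prop) :
    ∑ F : J → Y, (Finset.univ.filter (fun y => P (Function.update F j y))).card =
      Fintype.card Y * (Finset.univ.filter (fun F : J → Y => P F)).card := by
  have h1 : ∀ F : J → Y, (Finset.univ.filter (fun y => P (Function.update F j y))).card =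
      ∑ y : Y, if P (Function.update F j y) then 1 else 0 := fun F => by
    rw [Finset.card_filter]
  have h2 : Fintype.card Y * (Finset.univ.filter (fun F : J → Y => P F)).card =
      ∑ F : J → Y, ∑ y : Y, if P F then 1 else 0 := by
    rw [Finset.card_filter, Finset.mul_sum]
    simp
  rw [h2]
  simp_rw [h1]
  rw [← Fintype.sum_prod_type', ← Fintype.sum_prod_type']
  refine Finset.sum_nbij' (fun p => (Function.update p.1 j p.2, p.1 j))
      (fun p => (Function.update p.1 j p.2, p.1 j)) ?_ ?_ ?_ ?_ ?_ <;> simp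

theorem aux_S {V ι : Type*} [Fintype ι] {E : Finset (Finset V)} {k m : ℕ} (hk : 0 < k)
    (hT : TT E k m) (W : ι → Set V) (X : Finset ι)
    (hX : ∀ Z ⊆ X, X.card ≤ 2 * Z.card → ∃ y : Fin k → ι, (∀ j, y j ∈ Z) ∧ BadT E W y) :
    X.card ^ k ≤ (2 * k * (m * k)) ^ k *
      (Finset.univ.filter (fun y : Fin k → ι => (∀ j, y j ∈ X) ∧ BadT E W y)).card := by
  let B := Finset.univ.filter (fun y : Fin k → ι => (∀ j, y j ∈ X) ∧ BadT E W y)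
  let P : Finset (Finset (Fin k → ι)) :=
      B.powerset.filter (fun D => ∀ y ∈ D, ∀ y' ∈ D, y ≠ y' → ∀ j j', y j ≠ y' j')
  have hP : P.Nonempty := ⟨∅, by simp [P]⟩
  obtain ⟨D, hD, hmax⟩ := Finset.exists_max_image P Finset.card hP
  have hD' : D ⊆ B ∧ ∀ y ∈ D, ∀ y' ∈ D, y ≠ y' → ∀ j j', y j ≠ y' j' := by
    simpa only [P, Finset.mem_filter, Finset.mem_powerset] using hD
  let U : Finset ι := D.biUnion (fun y => Finset.univ.image y)
  have hU : U.card ≤ D.card * k :=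
    Finset.card_biUnion_le_card_mul _ _ _ (fun y _ => Finset.card_image_le.trans (by simp))
  have hXU : X.card ≤ 2 * U.card := by
    by_contra hcon
    push Not at hcon
    have h1 : X.card ≤ (X \ U).card + U.card := by
      have := Finset.le_card_sdiff U X
      omega
    obtain ⟨y, hy, hyb⟩ := hX (X \ U) Finset.sdiff_subset (by omega)
    have hyU : ∀ j, ∀ d ∈ D, ∀ j', y j ≠ d j' := by
      intro j d hd j' h
      have := (Finset.mem_sdiff.1 (hy j)).2
      apply this
      rw [h]
      exact Finset.mem_biUnion.2 ⟨d, hd, Finset.mem_image_of_mem _ (Finset.mem_univ _)⟩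
    have hyD : y ∉ D := fun h => hyU ⟨0, hk⟩ y h ⟨0, hk⟩ rfl
    have hins : insert y D ∈ P := by
      simp only [P, Finset.mem_filter, Finset.mem_powerset]
      refine ⟨Finset.insert_subset ?_ hD'.1, ?_⟩
      · simp only [B, Finset.mem_filter, Finset.mem_univ, true_and]
        exact ⟨fun j => (Finset.mem_sdiff.1 (hy j)).1, hyb⟩
      · intro a ha b hb hab j j'
        rcases Finset.mem_insert.1 ha with h1 | h1 <;> rcases Finset.mem_insert.1 hb with h2 | h2
        · exact absurd (h1.trans h2.symm) hab
        · rw [h1]; exact hyU j b h2 j'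
        · rw [h2]; exact (hyU j' a h1 j).symm
        · exact hD'.2 a h1 b h2 hab j j'
    have := hmax _ hins
    rw [Finset.card_insert_of_notMem hyD] at this
    omega
  have hXD : X.card ≤ 2 * k * D.card := by nlinarith
  have hDB : D.card ^ m * D.card ^ k ≤ (m * k) ^ k * (D.card ^ m * B.card) := by
    let A : (Fin k → Fin m) × (Fin k → Fin k) → Finset (Fin m → D) := fun p =>
      Finset.univ.filter (fun h => Function.Injective p.1 ∧
        BadT E W (fun j => (h (p.1 j)).1 (p.2 j)))
    have hcov : (Finset.univ : Finset (Fin m → D)) ⊆ Finset.univ.biUnion A := by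
      intro h _
      obtain ⟨a, c, ha, hb⟩ := aux_core hT W (fun i => (h i).1) (fun i => by
        have := hD'.1 (h i).2
        simp only [B, Finset.mem_filter] at this
        exact this.2.2)
      refine Finset.mem_biUnion.2 ⟨(a, c), Finset.mem_univ _, ?_⟩
      simp only [A, Finset.mem_filter, Finset.mem_univ, true_and]
      exact ⟨ha, hb⟩
    have hA : ∀ p, (A p).card * D.card ^ k ≤ D.card ^ m * B.card := by
      rintro ⟨a, c⟩
      by_cases ha : Function.Injective a
      · have hf := aux_fiber (T := D) a ha (fun u => BadT E W (fun j => (u j).1 (c j)))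
        simp only [Fintype.card_fin, Fintype.card_coe] at hf
        have : (A (a, c)).card = (Finset.univ.filter
          (fun f : Fin m → D => BadT E W (fun j => ((f ∘ a) j).1 (c j)))).card := by
          simp [A, ha]
        rw [this]
        refine le_trans (le_of_eq (by congr!)) (hf.le.trans ?_)
        apply Nat.mul_le_mul_left
        refine Finset.card_le_card_of_injOn (fun u j => (u j).1 (c j)) ?_ ?_
        · intro u hu
          simp only [Finset.coe_filter, Finset.mem_univ, true_and, Set.mem_ofPred_eq] at hu
          simp only [B, Finset.coe_filter, Finset.mem_univ, true_and, Set.mem_ofPred_eq]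
          refine ⟨fun j => ?_, hu⟩
          have := hD'.1 (u j).2
          simp only [B, Finset.mem_filter] at this
          exact this.2.1 _
        · intro u _ u' _ huu
          funext j
          by_contra hne
          exact hD'.2 _ (u j).2 _ (u' j).2 (fun h => hne (Subtype.ext h)) (c j) (c j)
            (congrFun huu j)
      · have : (A (a, c)).card = 0 := by simp [A, ha]
        rw [this]; simp
    have h1 : D.card ^ m ≤ ∑ p, (A p).card := by
      have := (Finset.card_le_card hcov).trans Finset.card_biUnion_le
      simpa using this
    calc D.card ^ m * D.card ^ k ≤ (∑ p, (A p).card) * D.card ^ k := Nat.mul_le_mul_right _ h1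
      _ = ∑ p, (A p).card * D.card ^ k := by rw [Finset.sum_mul]
      _ ≤ ∑ _p : (Fin k → Fin m) × (Fin k → Fin k), D.card ^ m * B.card :=
          Finset.sum_le_sum (fun p _ => hA p)
      _ = (m * k) ^ k * (D.card ^ m * B.card) := by simp [mul_pow]
  by_cases hD0 : D.card = 0
  · rw [hD0] at hXD
    have : X.card = 0 := by omega
    rw [this, zero_pow hk.ne']; exact Nat.zero_le _
  · have h2 : D.card ^ k ≤ (m * k) ^ k * B.card := by
      have hpos : 0 < D.card ^ m := pow_pos (Nat.pos_of_ne_zero hD0) _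
      refine Nat.le_of_mul_le_mul_left ?_ hpos
      calc _ ≤ _ := hDB
        _ = _ := by ring
    calc X.card ^ k ≤ (2 * k * D.card) ^ k := Nat.pow_le_pow_left hXD k
      _ = (2 * k) ^ k * D.card ^ k := by rw [mul_pow]
      _ ≤ (2 * k) ^ k * ((m * k) ^ k * B.card) := Nat.mul_le_mul_left _ h2
      _ = _ := by rw [mul_pow _ (m * k)]; ring

/-- Stage `j` of the fractional Helly argument. -/
def StG {V ι : Type*} {k m : ℕ} (E : Finset (Finset V)) (W : ι → Set V) (z : Fin k) (j : ℕ)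
    (F : Fin m → Fin k → ι) : Prop :=
  (∀ i : Fin m, i.val < j → BadT E W (F i)) ∧
    ∀ c : Fin m → Fin k, (∀ i : Fin m, j ≤ i.val → c i = z) → IsIndep E (⋃ i, W (F i (c i)))

theorem aux_St1 {V ι : Type*} {k m : ℕ} (E : Finset (Finset V)) (W : ι → Set V) (z : Fin k)
    (j : Fin m) (F : Fin m → Fin k → ι) (y : Fin k → ι)
    (h : StG E W z j (Function.update F j y)) :
    StG E W z j (Function.update F j (fun _ => y z)) := by
  refine ⟨fun i hi => ?_, fun c hc => ?_⟩
  · have hij : i ≠ j := fun h => by rw [h] at hi; exact lt_irrefl _ hi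
    have := h.1 i hi
    rwa [Function.update_of_ne hij] at this ⊢
  · refine aux_indep_mono (Set.iUnion_mono fun i => ?_) (h.2 c hc)
    by_cases hij : i = j
    · subst hij
      simp [hc i le_rfl]
    · simp [Function.update_of_ne hij]

theorem aux_St2 {V ι : Type*} {k m : ℕ} (E : Finset (Finset V)) (W : ι → Set V) (z : Fin k)
    (j : Fin m) (F : Fin m → Fin k → ι) (y : Fin k → ι) (hy : BadT E W y)
    (h : ∀ q, StG E W z j (Function.update F j (fun _ => y q))) :
    StG E W z (j + 1) (Function.update F j y) := by
  refine ⟨fun i hi => ?_, fun c hc => ?_⟩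
  · by_cases hij : i = j
    · subst hij; simpa using hy
    · have : i.val < j.val := by
        have : i.val ≠ j.val := fun h => hij (Fin.ext h)
        omega
      have := (h z).1 i this
      rwa [Function.update_of_ne hij] at this ⊢
  · have := (h (c j)).2 (Function.update c j z) (by
      intro i hi
      by_cases hij : i = j
      · subst hij; simp
      · rw [Function.update_of_ne hij]
        apply hc
        have : i.val ≠ j.val := fun h => hij (Fin.ext h)
        omega)
    refine aux_indep_mono (Set.iUnion_mono fun i => ?_) this
    by_cases hij : i = j
    · subst hij
      simp
    · simp [Function.update_of_ne hij]

theorem aux_cardz {ι : Type*} [Fintype ι] {k : ℕ} (z : Fin k) (X : Finset ι) :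
    (Finset.univ.filter (fun y : Fin k → ι => y z ∈ X)).card * Fintype.card ι =
      Fintype.card ι ^ k * X.card := by
  have := aux_fiber (T := ι) (K := Unit) (J := Fin k) (fun _ => z) (fun _ _ _ => rfl)
    (fun g => g () ∈ X)
  simp only [Fintype.card_unit, pow_one, Fintype.card_fin, Function.comp] at this
  refine Eq.trans (by congr!) (this.trans ?_)
  congr 1
  refine Finset.card_nbij' (fun g => g ()) (fun x _ => x) ?_ ?_ ?_ ?_
  · intro g hg; simpa using hg
  · intro g hg; simpa using hg
  · intro g hg; rfl
  · intro g hg; rfl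

theorem aux_step {V ι : Type*} [Fintype ι] [Nonempty ι] {E : Finset (Finset V)} {k m : ℕ}
    (hE : ∀ e ∈ E, e.card = k) (hm : 0 < m) (z : Fin k)
    (hT : TT E k m) (W : ι → Set V) (β c : ℝ) (hβ : 0 < β) (hc : 4 * β ≤ c)
    (hno : ∀ Z : Finset ι, β * Fintype.card ι ≤ Z.card → ¬ IsIndep E (⋃ i ∈ Z, W i))
    (j : Fin m)
    (hj : c * ((Fintype.card ι : ℝ) ^ k) ^ m ≤
      (Finset.univ.filter (fun F : Fin m → Fin k → ι => StG E W z j F)).card) :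
    (1 / ((2 * k * (m * k) : ℕ) : ℝ) ^ k * (c / 2) ^ (k + 1)) * ((Fintype.card ι : ℝ) ^ k) ^ m ≤
      (Finset.univ.filter (fun F : Fin m → Fin k → ι => StG E W z (j + 1) F)).card := by
  have hk : 0 < k := z.pos
  set N : ℝ := (Fintype.card ι : ℝ) with hN
  have hNpos : 0 < N := by rw [hN]; exact_mod_cast Fintype.card_pos
  set Y : ℝ := N ^ k with hY
  have hYpos : 0 < Y := pow_pos hNpos _
  set Q : ℝ := ((2 * k * (m * k) : ℕ) : ℝ) ^ k with hQ
  have hQpos : 0 < Q := by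
    rw [hQ]
    apply pow_pos
    have : 0 < 2 * k * (m * k) := by positivity
    exact_mod_cast this
  let X : (Fin m → Fin k → ι) → Finset ι := fun F =>
    Finset.univ.filter (fun x => StG E W z j (Function.update F j (fun _ => x)))
  have hcard : (Fintype.card (Fin k → ι) : ℝ) = Y := by simp [hY, hN]
  have hcardF : (Fintype.card (Fin m → Fin k → ι) : ℝ) = Y ^ m := by simp [hY, hN]
  -- upper bound on fibres
  have hup : ∀ F, ((Finset.univ.filter
      (fun y => StG E W z j (Function.update F j y))).card : ℝ) * N ≤ Y * (X F).card := by
    intro F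
    have h1 : (Finset.univ.filter (fun y => StG E W z j (Function.update F j y))).card ≤
        (Finset.univ.filter (fun y : Fin k → ι => y z ∈ X F)).card := by
      apply Finset.card_le_card
      intro y hy
      simp only [Finset.mem_filter, Finset.mem_univ, true_and, X] at hy ⊢
      exact aux_St1 E W z j F y hy
    have h2 := aux_cardz z (X F)
    have h3 : ((Finset.univ.filter (fun y : Fin k → ι => y z ∈ X F)).card : ℝ) * N =
        Y * (X F).card := by
      rw [hY, hN]; exact_mod_cast h2
    rw [← h3]
    gcongr
  let L : Finset (Fin m → Fin k → ι) :=
    Finset.univ.filter (fun F => c / 2 * N ≤ (X F).card)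
  have hs1 := aux_upd (Y := Fin k → ι) j (fun F => StG E W z j F)
  have hs2 := aux_upd (Y := Fin k → ι) j (fun F => StG E W z (j + 1) F)
  have hs1' : ∑ F : Fin m → Fin k → ι, ((Finset.univ.filter
      (fun y => StG E W z j (Function.update F j y))).card : ℝ) =
      Y * (Finset.univ.filter (fun F : Fin m → Fin k → ι => StG E W z j F)).card := by
    rw [← hcard]; exact_mod_cast hs1
  have hs2' : ∑ F : Fin m → Fin k → ι, ((Finset.univ.filter
      (fun y => StG E W z (j + 1) (Function.update F j y))).card : ℝ) =
      Y * (Finset.univ.filter (fun F : Fin m → Fin k → ι => StG E W z (j + 1) F)).card := by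
    rw [← hcard]; exact_mod_cast hs2
  have hc0 : 0 < c := by linarith
  have hL : c / 2 * Y ^ m ≤ L.card := by
    have hterm : ∀ F, ((Finset.univ.filter
      (fun y => StG E W z j (Function.update F j y))).card : ℝ) ≤
        (if F ∈ L then Y else 0) + c / 2 * Y := by
      intro F
      split_ifs with hF
      · have : ((Finset.univ.filter
          (fun y => StG E W z j (Function.update F j y))).card : ℝ) ≤ Y := by
          rw [← hcard]
          exact_mod_cast Finset.card_le_univ _
        have : 0 < c / 2 * Y := by positivity
        linarith
      · simp only [L, Finset.mem_filter, Finset.mem_univ, true_and, not_le] at hF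
        have h1 := hup F
        have h2 : ((Finset.univ.filter
          (fun y => StG E W z j (Function.update F j y))).card : ℝ) * N ≤ (c / 2 * Y) * N := by
          nlinarith
        have := le_of_mul_le_mul_right h2 hNpos
        linarith
    have hsum := Finset.sum_le_sum (fun F (_ : F ∈ (Finset.univ :
      Finset (Fin m → Fin k → ι))) => hterm F)
    rw [hs1', Finset.sum_add_distrib, Finset.sum_ite_mem, Finset.univ_inter, Finset.sum_const,
      Finset.sum_const, nsmul_eq_mul, nsmul_eq_mul, Finset.card_univ, hcardF] at hsum
    have h4 : Y * (c * Y ^ m) ≤ L.card * Y + Y ^ m * (c / 2 * Y) :=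
      (mul_le_mul_of_nonneg_left hj hYpos.le).trans hsum
    have h5 : (c / 2 * Y ^ m) * Y ≤ L.card * Y := by nlinarith
    exact le_of_mul_le_mul_right h5 hYpos
  have hlow : ∀ F ∈ L, 1 / Q * ((c / 2) ^ k * Y) ≤ ((Finset.univ.filter
      (fun y => StG E W z (j + 1) (Function.update F j y))).card : ℝ) := by
    intro F hF
    simp only [L, Finset.mem_filter, Finset.mem_univ, true_and] at hF
    have hS := aux_S hk hT W (X F) (by
      intro Z hZ hZc
      refine aux_bad_of hE W Z (hno Z ?_)
      have : ((X F).card : ℝ) ≤ 2 * Z.card := by exact_mod_cast hZc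
      nlinarith)
    have h1 : (Finset.univ.filter (fun y : Fin k → ι => (∀ q, y q ∈ X F) ∧ BadT E W y)).card ≤
        (Finset.univ.filter (fun y => StG E W z (j + 1) (Function.update F j y))).card := by
      apply Finset.card_le_card
      intro y hy
      simp only [Finset.mem_filter, Finset.mem_univ, true_and, X] at hy ⊢
      exact aux_St2 E W z j F y hy.2 hy.1
    have h2 : ((X F).card : ℝ) ^ k ≤ Q * (Finset.univ.filter
        (fun y : Fin k → ι => (∀ q, y q ∈ X F) ∧ BadT E W y)).card := by
      rw [hQ]; exact_mod_cast hS
    have h3 : (c / 2) ^ k * Y ≤ ((X F).card : ℝ) ^ k := by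
      rw [hY, ← mul_pow]
      exact pow_le_pow_left₀ (by positivity) hF k
    rw [one_div, inv_mul_le_iff₀ hQpos]
    refine h3.trans (h2.trans ?_)
    gcongr
  have hfin : L.card * (1 / Q * ((c / 2) ^ k * Y)) ≤
      Y * (Finset.univ.filter (fun F : Fin m → Fin k → ι => StG E W z (j + 1) F)).card := by
    rw [← hs2', ← nsmul_eq_mul, ← Finset.sum_const]
    refine (Finset.sum_le_sum hlow).trans ?_
    exact Finset.sum_le_sum_of_subset_of_nonneg (Finset.subset_univ _) (fun _ _ _ => by positivity)
  have h6 : (c / 2 * Y ^ m) * (1 / Q * ((c / 2) ^ k * Y)) ≤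
      Y * (Finset.univ.filter (fun F : Fin m → Fin k → ι => StG E W z (j + 1) F)).card :=
    (mul_le_mul_of_nonneg_right hL (by positivity)).trans hfin
  refine le_of_mul_le_mul_left (le_trans (le_of_eq ?_) h6) hYpos
  ring

theorem aux_FH (k m : ℕ) (hk : 0 < k) (hm : 0 < m) (α : ℝ) (hα : 0 < α) :
    ∃ β : ℝ, 0 < β ∧ ∀ (V : Type*) (E : Finset (Finset V)), (∀ e ∈ E, e.card = k) → TT E k m →
    ∀ (ι : Type*) [Fintype ι] [Nonempty ι] (W : ι → Set V),
    α * (Fintype.card ι : ℝ) ^ m ≤ (Finset.univ.filter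
      (fun f : Fin m → ι => IsIndep E (⋃ i, W (f i)))).card →
    ∃ I : Finset ι, β * Fintype.card ι ≤ I.card ∧ IsIndep E (⋃ i ∈ I, W i) := by
  let cc : ℕ → ℝ := fun j => Nat.rec α
    (fun _ c => 1 / ((2 * k * (m * k) : ℕ) : ℝ) ^ k * (c / 2) ^ (k + 1)) j
  have hcc0 : cc 0 = α := rfl
  have hccs : ∀ j, cc (j + 1) =
    1 / ((2 * k * (m * k) : ℕ) : ℝ) ^ k * (cc j / 2) ^ (k + 1) := fun j => rfl
  have hpos : ∀ j, 0 < cc j := by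
    intro j
    induction j with
    | zero => exact hα
    | succ j ih => rw [hccs]; positivity
  have hmin : ∀ n, ∃ β : ℝ, 0 < β ∧ ∀ j ≤ n, 4 * β ≤ cc j := by
    intro n
    induction n with
    | zero =>
      refine ⟨cc 0 / 4, by have := hpos 0; positivity, fun j hj => ?_⟩
      rw [Nat.le_zero.1 hj]; linarith
    | succ n ih =>
      obtain ⟨β, hβ, h⟩ := ih
      refine ⟨min β (cc (n + 1) / 4), lt_min hβ (by have := hpos (n + 1); positivity),
        fun j hj => ?_⟩
      rcases Nat.lt_or_ge n j with h1 | h1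
      · have : j = n + 1 := by omega
        subst this
        have := min_le_right β (cc (n + 1) / 4)
        linarith
      · have := min_le_left β (cc (n + 1) / 4)
        have := h j h1
        linarith
  obtain ⟨β, hβ, hβc⟩ := hmin m
  refine ⟨β, hβ, fun V E hE hT ι _ _ W hd => ?_⟩
  by_contra hcon
  push Not at hcon
  let z : Fin k := ⟨0, hk⟩
  have main : ∀ j ≤ m, cc j * ((Fintype.card ι : ℝ) ^ k) ^ m ≤
      (Finset.univ.filter (fun F : Fin m → Fin k → ι => StG E W z j F)).card := by
    intro j
    induction j with
    | zero =>
      intro _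
      rw [hcc0]
      have hfib := aux_fiber (T := ι) (K := Fin m) (J := Fin m × Fin k) (fun i => (i, z))
        (fun a b h => by simpa using h) (fun f => IsIndep E (⋃ i, W (f i)))
      simp only [Fintype.card_prod, Fintype.card_fin] at hfib
      have heq : (Finset.univ.filter (fun F : Fin m → Fin k → ι => StG E W z 0 F)).card =
          (Finset.univ.filter (fun f : Fin m × Fin k → ι =>
            IsIndep E (⋃ i, W ((f ∘ fun i => (i, z)) i)))).card := by
        refine Finset.card_equiv (Equiv.curry (Fin m) (Fin k) ι).symm ?_
        intro F
        simp only [Finset.mem_filter, Finset.mem_univ, true_and]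
        constructor
        · intro h
          exact h.2 (fun _ => z) (fun _ _ => rfl)
        · intro h
          refine ⟨fun i hi => absurd hi (Nat.not_lt_zero _), fun c hc => ?_⟩
          have : c = fun _ => z := funext fun i => hc i (Nat.zero_le _)
          subst this
          exact h
      have hNpos : (0 : ℝ) < (Fintype.card ι : ℝ) ^ m := by
        have : (0 : ℝ) < Fintype.card ι := by exact_mod_cast Fintype.card_pos
        positivity
      have hfib' : ((Finset.univ.filter (fun F : Fin m → Fin k → ι => StG E W z 0 F)).card : ℝ) *
        (Fintype.card ι : ℝ) ^ m = (Fintype.card ι : ℝ) ^ (m * k) * (Finset.univ.filter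
      (fun f : Fin m → ι => IsIndep E (⋃ i, W (f i)))).card := by
        rw [heq]; exact_mod_cast Eq.trans (by congr!) (hfib.trans (by congr!))
      refine le_of_mul_le_mul_right ?_ hNpos
      rw [hfib']
      calc α * ((Fintype.card ι : ℝ) ^ k) ^ m * (Fintype.card ι : ℝ) ^ m
          = (Fintype.card ι : ℝ) ^ (m * k) * (α * (Fintype.card ι : ℝ) ^ m) := by
            rw [← pow_mul, mul_comm k m]; ring
        _ ≤ _ := by gcongr
    | succ j ih =>
      intro hj
      have h1 := ih (by omega)
      rw [hccs]
      exact aux_step hE hm z hT W β (cc j) hβ (hβc j (by omega)) hcon ⟨j, by omega⟩ h1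
  have hlast := main m le_rfl
  have hp : (0 : ℝ) < (Finset.univ.filter
      (fun F : Fin m → Fin k → ι => StG E W z m F)).card := by
    refine lt_of_lt_of_le ?_ hlast
    have : (0 : ℝ) < Fintype.card ι := by exact_mod_cast Fintype.card_pos
    have := hpos m
    positivity
  obtain ⟨F, hF⟩ := Finset.card_pos.1 (by exact_mod_cast hp :
    0 < (Finset.univ.filter (fun F : Fin m → Fin k → ι => StG E W z m F)).card)
  simp only [Finset.mem_filter, Finset.mem_univ, true_and] at hF
  obtain ⟨a, c, ha, hb⟩ := aux_core hT W F (fun i => hF.1 i i.2)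
  apply hb
  refine aux_indep_mono ?_ (hF.2 (Function.extend a c (fun _ => z))
    (fun i hi => absurd i.2 (by omega)))
  intro x hx
  obtain ⟨j, hj⟩ := Set.mem_iUnion.1 hx
  refine Set.mem_iUnion.2 ⟨a j, ?_⟩
  rw [ha.extend_apply]
  exact hj

theorem aux_sel (k n : ℕ) (hk : 0 < k) :
    ∃ β : ℝ, 0 < β ∧ ∀ (V : Type*) (E : Finset (Finset V)), (∀ e ∈ E, e.card = k) →
    TT E k (n + 1) → ∀ (A : Type) [Fintype A] [Nonempty A] (σ : A → Set V),
    (∀ a, IsIndep E (σ a)) → ∃ τ : Set V, IsIndep E τ ∧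
      β * (Fintype.card A : ℝ) ^ (Fintype.card (Fin n → Fin (n + 1))) ≤ (Finset.univ.filter
        (fun y : (Fin n → Fin (n + 1)) → A => (⋂ d, σ (y d)) ⊆ τ)).card := by
  obtain ⟨β, hβ, hFH⟩ := aux_FH k (n + 1) hk (Nat.succ_pos n) (1 / (n + 1 : ℝ)) (by positivity)
  refine ⟨β, hβ, fun V E hE hT A _ _ σ hσ => ?_⟩
  let D := Fin n → Fin (n + 1)
  let C := Fin (n + 1) → Fin (n + 1)
  let W : (D → A) → Set V := fun y => ⋂ d, σ (y d)
  let Φ : Fin (n + 1) → (C → A) ≃ (Fin (n + 1) → D → A) := fun i =>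
    (Equiv.arrowCongr (Fin.insertNthEquiv (fun _ => Fin (n + 1)) i).symm (Equiv.refl A)).trans
      (Equiv.curry _ _ _)
  have hΦ : ∀ i f c d, Φ i f c d = f (Fin.insertNth i c d) := fun i f c d => rfl
  have tv : ∀ f : C → A, ∃ i, IsIndep E (⋃ c, W (Φ i f c)) := by
    intro f
    by_contra hcon
    push Not at hcon
    obtain ⟨a, c, ha, hb⟩ := aux_core hT W (fun i => Φ i f) hcon
    apply hb
    let x : C := Function.extend a c (fun _ => 0)
    refine aux_indep_mono (Set.iUnion_subset fun j => ?_) (hσ (f x))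
    intro v hv
    have this : v ∈ σ (f (Fin.insertNth (a j) (c j) (Fin.removeNth (a j) x))) :=
      Set.mem_iInter.1 hv (Fin.removeNth (a j) x)
    have hx : x = Fin.insertNth (a j) (c j) (Fin.removeNth (a j) x) := by
      have h1 : x (a j) = c j := ha.extend_apply _ _ _
      rw [← h1, Fin.insertNth_self_removeNth]
    rw [← hx] at this
    exact this
  let G := Finset.univ.filter (fun F : Fin (n + 1) → D → A => IsIndep E (⋃ c, W (F c)))
  have hG : Fintype.card (C → A) ≤ (n + 1) * G.card := by
    have hcov : (Finset.univ : Finset (C → A)) ⊆ Finset.univ.biUnion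
        (fun i => Finset.univ.filter (fun f => Φ i f ∈ G)) := by
      intro f _
      obtain ⟨i, hi⟩ := tv f
      refine Finset.mem_biUnion.2 ⟨i, Finset.mem_univ _, ?_⟩
      simp only [Finset.mem_filter, Finset.mem_univ, true_and, G]
      exact hi
    have h1 := (Finset.card_le_card hcov).trans Finset.card_biUnion_le
    have h2 : ∀ i, (Finset.univ.filter (fun f => Φ i f ∈ G)).card = G.card := by
      intro i
      refine Finset.card_equiv (Φ i) ?_
      intro f
      simp
    rw [Finset.sum_congr rfl (fun i _ => h2 i)] at h1
    simpa [Finset.card_univ] using h1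
  rw [Fintype.card_congr (Φ 0)] at hG
  obtain ⟨I, hI, hind⟩ := hFH V E hE hT (D → A) W (by
    have h1 : ((Fintype.card (D → A) : ℕ) : ℝ) ^ (n + 1) ≤ (n + 1) * G.card := by
      have : Fintype.card (Fin (n + 1) → D → A) = Fintype.card (D → A) ^ (n + 1) := by
        rw [Fintype.card_fun, Fintype.card_fin]
      rw [this] at hG
      exact_mod_cast hG
    rw [one_div, inv_mul_le_iff₀ (by positivity)]
    exact h1)
  refine ⟨_, hind, ?_⟩
  have h1 : (Fintype.card A : ℝ) ^ (Fintype.card (Fin n → Fin (n + 1))) =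
      (Fintype.card (D → A) : ℝ) := by
    rw [Fintype.card_fun (α := D)]; push_cast; rfl
  rw [h1]
  refine hI.trans ?_
  have : I ⊆ Finset.univ.filter (fun y : D → A => (⋂ d, σ (y d)) ⊆ ⋃ i ∈ I, W i) := by
    intro y hy
    simp only [Finset.mem_filter, Finset.mem_univ, true_and]
    exact Set.subset_biUnion_of_mem (u := W) hy
  exact_mod_cast Finset.card_le_card this

theorem aux_net (β ε : ℝ) (hβ : 0 < β) (hε : 0 < ε) (D : Type) [Fintype D] [Nonempty D]
    [DecidableEq D] :
    ∃ K : ℕ, ∀ (V : Type*)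
    (E : Finset (Finset V)), (∀ e ∈ E, e.Nonempty) →
    (∀ (A : Type) [Fintype A] [Nonempty A] (σ : A → Set V),
      (∀ a, IsIndep E (σ a)) → ∃ τ : Set V, IsIndep E τ ∧
      β * (Fintype.card A : ℝ) ^ (Fintype.card D) ≤ (Finset.univ.filter
        (fun y : D → A => (⋂ d, σ (y d)) ⊆ τ)).card) →
    ∀ (A : Type) [Fintype A] [Nonempty A] (σ : A → Set V), (∀ a, IsIndep E (σ a)) →
    (∀ v, ε * Fintype.card A ≤ (Finset.univ.filter (fun a => v ∈ σ a)).card) →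
    ∃ τ : Fin K → Set V, (∀ i, IsIndep E (τ i)) ∧ ∀ v, ∃ i, v ∈ τ i := by
  obtain ⟨K, hK⟩ := exists_nat_gt (1 / (β * ε ^ Fintype.card D))
  refine ⟨K, fun V E hE hsel A _ _ σ hσ hv => ?_⟩
  have hA : (0 : ℝ) < Fintype.card A := by exact_mod_cast Fintype.card_pos
  have claim : ∀ s : ℕ, ∃ τ : Fin s → Set V, (∀ i, IsIndep E (τ i)) ∧ ((∀ v, ∃ i, v ∈ τ i) ∨
      s * (β * ε ^ Fintype.card D * (Fintype.card A : ℝ) ^ Fintype.card D) ≤ (Finset.univ.filter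
        (fun y : D → A => ∃ i, (⋂ d, σ (y d)) ⊆ τ i)).card) := by
    intro s
    induction s with
    | zero => exact ⟨fun _ => ∅, fun i => i.elim0, Or.inr (by simp)⟩
    | succ s ih =>
      obtain ⟨τ, hτ, hor⟩ := ih
      by_cases hcov : ∀ v, ∃ i, v ∈ τ i
      · refine ⟨Fin.cons ∅ τ, fun i => ?_, Or.inl fun v => ?_⟩
        · refine Fin.cases ?_ (fun i => ?_) i
          · intro e he hs
            obtain ⟨x, hx⟩ := hE e he
            exact hs hx
          · simpa using hτ i
        · obtain ⟨i, hi⟩ := hcov v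
          exact ⟨i.succ, by simpa using hi⟩
      have hor := hor.resolve_left hcov
      push Not at hcov
      obtain ⟨v, hvτ⟩ := hcov
      let S := {a : A // v ∈ σ a}
      have hScard : (Fintype.card S : ℝ) = (Finset.univ.filter (fun a => v ∈ σ a)).card := by
        rw [Fintype.card_subtype]
      have hS := hv v
      rw [← hScard] at hS
      have hSpos : (0 : ℝ) < Fintype.card S := lt_of_lt_of_le (by positivity) hS
      haveI : Nonempty S := Fintype.card_pos_iff.1 (by exact_mod_cast hSpos)
      obtain ⟨τ', hτ', hc⟩ := hsel S (fun a => σ a.1) (fun a => hσ a.1)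
      refine ⟨Fin.cons τ' τ, fun i => ?_, Or.inr ?_⟩
      · refine Fin.cases ?_ (fun i => ?_) i
        · simpa using hτ'
        · simpa using hτ i
      let B1 := Finset.univ.filter (fun y : D → A => ∃ i, (⋂ d, σ (y d)) ⊆ τ i)
      let B2 := (Finset.univ.filter (fun y : D → S => (⋂ d, σ (y d).1) ⊆ τ')).image
        (fun y d => (y d).1)
      have hB2 : B2.card = (Finset.univ.filter
          (fun y : D → S => (⋂ d, σ (y d).1) ⊆ τ')).card := by
        apply Finset.card_image_of_injective
        intro y y' h
        funext d
        exact Subtype.ext (congrFun h d)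
      have hdis : Disjoint B1 B2 := by
        rw [Finset.disjoint_left]
        intro y h1 h2
        obtain ⟨y', -, rfl⟩ := Finset.mem_image.1 h2
        simp only [B1, Finset.mem_filter, Finset.mem_univ, true_and] at h1
        obtain ⟨i, hi⟩ := h1
        exact hvτ i (hi (Set.mem_iInter.2 fun d => (y' d).2))
      have hsub : B1 ∪ B2 ⊆ Finset.univ.filter
          (fun y : D → A => ∃ i, (⋂ d, σ (y d)) ⊆ (Fin.cons τ' τ : Fin (s + 1) → Set V) i) := by
        intro y hy
        simp only [Finset.mem_filter, Finset.mem_univ, true_and]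
        rcases Finset.mem_union.1 hy with h | h
        · simp only [B1, Finset.mem_filter, Finset.mem_univ, true_and] at h
          obtain ⟨i, hi⟩ := h
          exact ⟨i.succ, by simpa using hi⟩
        · obtain ⟨y', hy', rfl⟩ := Finset.mem_image.1 h
          simp only [Finset.mem_filter, Finset.mem_univ, true_and] at hy'
          exact ⟨0, by simpa using hy'⟩
      have h1 := Finset.card_le_card hsub
      rw [Finset.card_union_of_disjoint hdis, hB2] at h1
      have h2 : ((B1.card : ℝ) + (Finset.univ.filter
          (fun y : D → S => (⋂ d, σ (y d).1) ⊆ τ')).card) ≤ (Finset.univ.filter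
          (fun y : D → A => ∃ i, (⋂ d, σ (y d)) ⊆
            (Fin.cons τ' τ : Fin (s + 1) → Set V) i)).card := by exact_mod_cast h1
      refine le_trans ?_ h2
      have h3 : β * ε ^ Fintype.card D * (Fintype.card A : ℝ) ^ Fintype.card D ≤
          β * (Fintype.card S : ℝ) ^ Fintype.card D := by
        rw [mul_assoc, ← mul_pow]
        gcongr
      push_cast
      have h4 := h3.trans hc
      rw [add_mul, one_mul]
      exact add_le_add hor h4
  obtain ⟨τ, hτ, hor⟩ := claim K
  refine ⟨τ, hτ, hor.resolve_right fun h => ?_⟩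
  have h1 : ((Finset.univ.filter
        (fun y : D → A => ∃ i, (⋂ d, σ (y d)) ⊆ τ i)).card : ℝ) ≤
      (Fintype.card A : ℝ) ^ Fintype.card D := by
    have := Finset.card_le_univ (Finset.univ.filter
        (fun y : D → A => ∃ i, (⋂ d, σ (y d)) ⊆ τ i))
    rw [Fintype.card_fun] at this
    exact_mod_cast this
  have hpos : 0 < β * ε ^ Fintype.card D := by positivity
  rw [div_lt_iff₀ hpos] at hK
  have hAp : (0 : ℝ) < (Fintype.card A : ℝ) ^ Fintype.card D := by positivity
  have h2 := h.trans h1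
  nlinarith

theorem aux_mw (β : ℝ) (hβ : 0 < β) (hβ1 : β ≤ 1) : ∃ ε : ℝ, 0 < ε ∧ ∀ (V : Type u) [Fintype V]
    [Nonempty V] (E : Finset (Finset V)),
    (∀ (ι : Type u) [Fintype ι] [Nonempty ι] (p : ι → V), ∃ I : Finset ι,
      β * Fintype.card ι ≤ I.card ∧ IsIndep E (⋃ i ∈ I, {p i})) →
    ∃ N : ℕ, 0 < N ∧ ∃ σ : Fin N → Set V, (∀ a, IsIndep E (σ a)) ∧
      ∀ v, ε * N ≤ (Finset.univ.filter (fun a => v ∈ σ a)).card := by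
  obtain ⟨q, hq⟩ := exists_pow_lt_of_lt_one (show (0 : ℝ) < 1 / 2 by norm_num)
    (show 1 - β / 2 < 1 by linarith)
  have hq0 : 0 < q := by
    rcases Nat.eq_zero_or_pos q with h | h
    · subst h; norm_num at hq
    · exact h
  refine ⟨1 / (2 * q), by positivity, fun V _ _ E hI => ?_⟩
  have hw : ∀ μ : V → ℕ, (∀ v, 0 < μ v) → ∃ τ : Set V, IsIndep E τ ∧
      β * ∑ v, (μ v : ℝ) ≤ ∑ v, if v ∈ τ then (μ v : ℝ) else 0 := by
    intro μ hμ
    haveI : Nonempty (Σ v : V, Fin (μ v)) := by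
      obtain ⟨v⟩ := ‹Nonempty V›
      exact ⟨⟨v, ⟨0, hμ v⟩⟩⟩
    obtain ⟨I, hIc, hind⟩ := hI (Σ v : V, Fin (μ v)) (fun x => x.1)
    refine ⟨_, hind, ?_⟩
    have h1 : ((Fintype.card (Σ v : V, Fin (μ v)) : ℕ) : ℝ) = ∑ v, (μ v : ℝ) := by
      simp
    rw [h1] at hIc
    refine hIc.trans ?_
    let τ : Set V := ⋃ i ∈ I, {i.1}
    have h2 : I ⊆ (Finset.univ.filter (fun v => v ∈ τ)).sigma (fun v => Finset.univ) := by
      intro x hx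
      simp only [Finset.mem_sigma, Finset.mem_filter, Finset.mem_univ, true_and, and_true]
      exact Set.mem_biUnion hx rfl
    have h3 := Finset.card_le_card h2
    rw [Finset.card_sigma, Finset.sum_filter] at h3
    simp only [Finset.card_univ, Fintype.card_fin] at h3
    exact_mod_cast h3
  have claim : ∀ n : ℕ, ∃ σ : Fin n → Set V, (∀ a, IsIndep E (σ a)) ∧
      ∑ v, (1 / 2 : ℝ) ^ (∑ a, if v ∈ σ a then 1 else 0) ≤
        Fintype.card V * (1 - β / 2) ^ n := by
    intro n
    induction n with
    | zero => exact ⟨fun _ => ∅, fun a => a.elim0, by simp⟩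
    | succ n ih =>
      obtain ⟨σ, hσ, hs⟩ := ih
      let c : V → ℕ := fun v => ∑ a, if v ∈ σ a then 1 else 0
      have hcn : ∀ v, c v ≤ n := by
        intro v
        calc c v ≤ ∑ _a : Fin n, 1 := Finset.sum_le_sum (fun a _ => by split_ifs <;> simp)
          _ = n := by simp
      obtain ⟨τ, hτ, hμ⟩ := hw (fun v => 2 ^ (n - c v)) (fun v => by positivity)
      have hconv : ∀ v, ((2 ^ (n - c v) : ℕ) : ℝ) = 2 ^ n * (1 / 2 : ℝ) ^ c v := by
        intro v
        have : (2 : ℝ) ^ n = 2 ^ (n - c v) * 2 ^ c v := by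
          rw [← pow_add, Nat.sub_add_cancel (hcn v)]
        rw [this, mul_assoc, ← mul_pow]
        norm_num
      simp only [hconv] at hμ
      have hμ' : β * ∑ v, (1 / 2 : ℝ) ^ c v ≤ ∑ v, if v ∈ τ then (1 / 2 : ℝ) ^ c v else 0 := by
        have h2 : (0 : ℝ) < 2 ^ n := by positivity
        refine le_of_mul_le_mul_left ?_ h2
        calc _ = β * ∑ v, 2 ^ n * (1 / 2 : ℝ) ^ c v := by rw [← Finset.mul_sum]; ring
          _ ≤ _ := hμ
          _ = _ := by
            rw [Finset.mul_sum]
            refine Finset.sum_congr rfl fun v _ => ?_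
            split_ifs <;> simp
      refine ⟨Fin.cons τ σ, fun i => ?_, ?_⟩
      · refine Fin.cases ?_ (fun i => ?_) i
        · simpa using hτ
        · simpa using hσ i
      have hterm : ∀ v, (1 / 2 : ℝ) ^ (∑ a, if v ∈ (Fin.cons τ σ : Fin (n + 1) → Set V) a
          then 1 else 0) = (1 / 2 : ℝ) ^ c v - 1 / 2 * (if v ∈ τ then (1 / 2 : ℝ) ^ c v else 0) := by
        intro v
        rw [Fin.sum_univ_succ]
        simp only [Fin.cons_zero, Fin.cons_succ]
        rw [pow_add]
        change _ * (1 / 2 : ℝ) ^ c v = _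
        split_ifs
        · rw [pow_one]; ring
        · simp
      rw [Finset.sum_congr rfl (fun v _ => hterm v), Finset.sum_sub_distrib, ← Finset.mul_sum]
      have hs' : ∑ v, (1 / 2 : ℝ) ^ c v ≤ Fintype.card V * (1 - β / 2) ^ n := hs
      have h5 : (1 - β / 2) * ∑ v, (1 / 2 : ℝ) ^ c v ≤
          (1 - β / 2) * (Fintype.card V * (1 - β / 2) ^ n) :=
        mul_le_mul_of_nonneg_left hs' (by linarith)
      rw [pow_succ]
      linarith
  let l := Fintype.card V
  have hl : 0 < l := Fintype.card_pos
  obtain ⟨σ, hσ, hs⟩ := claim (q * (2 * l))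
  refine ⟨q * (2 * l), by positivity, σ, hσ, fun v => ?_⟩
  have heq : (1 / (2 * q : ℝ)) * ((q * (2 * l) : ℕ) : ℝ) = l := by
    push_cast
    have : (q : ℝ) ≠ 0 := by exact_mod_cast hq0.ne'
    field_simp
  rw [heq, Finset.card_filter]
  by_contra hcon
  push Not at hcon
  have hlt : (∑ a, if v ∈ σ a then 1 else 0) < l := by exact_mod_cast hcon
  have h1 : (1 / 2 : ℝ) ^ l ≤ (1 / 2 : ℝ) ^ (∑ a, if v ∈ σ a then 1 else 0) :=
    pow_le_pow_of_le_one (by norm_num) (by norm_num) hlt.le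
  have h2 : (1 / 2 : ℝ) ^ (∑ a, if v ∈ σ a then 1 else 0) ≤
      ∑ v, (1 / 2 : ℝ) ^ (∑ a, if v ∈ σ a then 1 else 0) :=
    Finset.single_le_sum (f := fun v => (1 / 2 : ℝ) ^ (∑ a, if v ∈ σ a then 1 else 0))
      (fun _ _ => by positivity) (Finset.mem_univ v)
  have h3 : (1 - β / 2) ^ (q * (2 * l)) ≤ (1 / 4 : ℝ) ^ l := by
    rw [pow_mul, pow_mul]
    refine pow_le_pow_left₀ (by positivity) ?_ l
    have h0 : 0 ≤ (1 - β / 2) ^ q := pow_nonneg (by linarith) q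
    nlinarith
  have h4 : (1 / 2 : ℝ) ^ l ≤ l * (1 / 4 : ℝ) ^ l :=
    h1.trans (h2.trans (hs.trans (by gcongr)))
  have h5 : (1 / 4 : ℝ) ^ l = (1 / 2 : ℝ) ^ l * (1 / 2 : ℝ) ^ l := by
    rw [← mul_pow]; norm_num
  rw [h5] at h4
  have h6 : (l : ℝ) < 2 ^ l := by exact_mod_cast Nat.lt_two_pow_self
  have h7 : (2 : ℝ) ^ l * (1 / 2 : ℝ) ^ l = 1 := by rw [← mul_pow]; norm_num
  have h8 : (0 : ℝ) < (1 / 2 : ℝ) ^ l := by positivity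
  have h9 : (l : ℝ) * (1 / 2 : ℝ) ^ l < 1 := by
    have := mul_lt_mul_of_pos_right h6 h8
    linarith
  nlinarith

theorem aux_dens (k m w : ℕ) (hk : 2 ≤ k) : ∃ α : ℝ, 0 < α ∧ ∀ (V : Type u)
    (E : Finset (Finset V)), (∀ e ∈ E, e.card = k) → CliqueNumLE E k w →
    ∀ (ι : Type u) [Fintype ι] [Nonempty ι] (p : ι → V), α * (Fintype.card ι : ℝ) ^ m ≤
      (Finset.univ.filter (fun f : Fin m → ι => IsIndep E (⋃ i, {p (f i)}))).card := by
  obtain ⟨R, hR⟩ := aux_ramsey k (w + 1 + k) m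
  refine ⟨1 / ((R : ℝ) ^ m + 1), by positivity, fun V E hE hw ι _ _ p => ?_⟩
  let Pr : (Fin m → ι) → Prop := fun f => IsIndep E (⋃ i, {p (f i)})
  have hram : ∀ f : Fin R → ι, ∃ a : Fin m → Fin R, Function.Injective a ∧ Pr (f ∘ a) := by
    intro f
    let q : Fin R → V := fun i => p (f i)
    obtain ⟨S, -, ⟨hSc, hS⟩ | ⟨hSc, hS⟩⟩ := hR (Fin R) (fun s => s.image q ∈ E) Finset.univ
      (by simp)
    · exfalso
      have hinj : Set.InjOn q S := by
        intro i hi j hj hij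
        by_contra hne
        have hpair : ({i, j} : Finset (Fin R)) ⊆ S := by
          intro x hx
          simp only [Finset.mem_insert, Finset.mem_singleton] at hx
          rcases hx with rfl | rfl
          · exact hi
          · exact hj
        obtain ⟨s, hs1, hs2, hsc⟩ := Finset.exists_subsuperset_card_eq (n := k) hpair
          (by rw [Finset.card_pair hne]; exact hk) (by omega)
        have h1 := hE _ (hS s hs2 hsc)
        rw [← hsc, Finset.card_image_iff] at h1
        exact hne (h1 (hs1 (by simp)) (hs1 (by simp)) hij)
      have hQ := hw (S.image q) (by
        intro e he hec
        obtain ⟨s, hs, rfl⟩ := Finset.subset_image_iff.1 he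
        have hs' : s ⊆ S := by exact_mod_cast hs
        refine hS s hs' ?_
        rw [← hec, Finset.card_image_of_injOn (hinj.mono (by exact_mod_cast hs'))])
      rw [Finset.card_image_of_injOn hinj] at hQ
      omega
    · let g := S.equivFinOfCardEq hSc
      refine ⟨fun i => (g.symm i).1, Subtype.val_injective.comp g.symm.injective, ?_⟩
      intro e he hsub
      have : ∀ x ∈ e, ∃ i ∈ S, q i = x := by
        intro x hx
        have := hsub hx
        simp only [Set.mem_iUnion, Set.mem_singleton_iff, Function.comp] at this
        obtain ⟨i, hi⟩ := this
        exact ⟨_, (g.symm i).2, hi.symm⟩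
      have hne : Nonempty (Fin R) := by
        obtain ⟨x, hx⟩ : e.Nonempty := Finset.card_pos.1 (by rw [hE e he]; omega)
        obtain ⟨i, -, -⟩ := this x hx
        exact ⟨i⟩
      choose! h hhS hhq using this
      refine hS (e.image h) ?_ ?_ ?_
      · intro i hi
        obtain ⟨x, hx, rfl⟩ := Finset.mem_image.1 hi
        exact hhS x hx
      · rw [Finset.card_image_of_injOn, hE e he]
        intro x hx y hy hxy
        rw [← hhq x hx, ← hhq y hy, hxy]
      · convert he using 1
        rw [Finset.image_image]
        ext x
        simp only [Finset.mem_image, Function.comp]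
        constructor
        · rintro ⟨y, hy, rfl⟩; rw [hhq y hy]; exact hy
        · intro hx; exact ⟨x, hx, hhq x hx⟩
  let N := Fintype.card ι
  have hN : 0 < N := Fintype.card_pos
  let G := (Finset.univ.filter Pr).card
  let A : (Fin m → Fin R) → Finset (Fin R → ι) := fun a =>
    Finset.univ.filter (fun f => Function.Injective a ∧ Pr (f ∘ a))
  have hcov : (Finset.univ : Finset (Fin R → ι)) ⊆ Finset.univ.biUnion A := by
    intro f _
    obtain ⟨a, ha⟩ := hram f
    refine Finset.mem_biUnion.2 ⟨a, Finset.mem_univ _, ?_⟩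
    simp only [A, Finset.mem_filter, Finset.mem_univ, true_and]
    exact ha
  have hA : ∀ a, (A a).card * N ^ m ≤ N ^ R * G := by
    intro a
    by_cases ha : Function.Injective a
    · have hf := aux_fiber (T := ι) a ha Pr
      simp only [Fintype.card_fin] at hf
      refine le_trans ?_ (hf.le.trans (le_of_eq ?_))
      swap
      · congr!
      apply Nat.mul_le_mul_right
      apply Finset.card_le_card
      intro f hf
      simp only [A, Finset.mem_filter, Finset.mem_univ, true_and] at hf ⊢
      exact hf.2
    · have : (A a).card = 0 := by simp [A, ha]
      rw [this]; simp
  have h1 : N ^ R ≤ ∑ a, (A a).card := by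
    have := (Finset.card_le_card hcov).trans Finset.card_biUnion_le
    simpa using this
  have h2 : N ^ R * N ^ m ≤ N ^ R * (R ^ m * G) := by
    calc N ^ R * N ^ m ≤ (∑ a, (A a).card) * N ^ m := Nat.mul_le_mul_right _ h1
      _ = ∑ a, (A a).card * N ^ m := by rw [Finset.sum_mul]
      _ ≤ ∑ _a : Fin m → Fin R, N ^ R * G := Finset.sum_le_sum (fun a _ => hA a)
      _ = _ := by simp; ring
  have h3 : N ^ m ≤ R ^ m * G := Nat.le_of_mul_le_mul_left h2 (pow_pos hN _)
  have h4 : (N : ℝ) ^ m ≤ (R : ℝ) ^ m * G := by exact_mod_cast h3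
  rw [one_div, inv_mul_le_iff₀ (by positivity)]
  have h5 : (0 : ℝ) ≤ G := by positivity
  calc (N : ℝ) ^ m ≤ (R : ℝ) ^ m * G := h4
    _ ≤ ((R : ℝ) ^ m + 1) * G := by linarith
    _ = _ := rfl

theorem aux_chi (k t w : ℕ) (hk : 2 ≤ k) (hkt : k ≤ t) : ∃ K : ℕ, ∀ (V : Type u) [Fintype V]
    [DecidableEq V] (E : Finset (Finset V)), (∀ e ∈ E, e.card = k) → E.Nonempty →
    PropT E k t → CliqueNumLE E k w → ChromaticLE E K := by
  obtain ⟨n, rfl⟩ : ∃ n, t = n + 1 := ⟨t - 1, by omega⟩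
  obtain ⟨α, hα, hdens⟩ := aux_dens.{u} k (n + 1) w hk
  obtain ⟨β0, hβ0, hFH⟩ := aux_FH.{u, u} k (n + 1) (by omega) (Nat.succ_pos n) α hα
  obtain ⟨ε, hε, hmw⟩ := aux_mw.{u} (min β0 1) (lt_min hβ0 one_pos) (min_le_right _ _)
  obtain ⟨β, hβ, hsel⟩ := aux_sel.{u} k n (by omega)
  obtain ⟨K, hK⟩ := aux_net.{u} β ε hβ hε (Fin n → Fin (n + 1))
  refine ⟨K, fun V _ _ E hE hne hT hw => ?_⟩
  have hTT := aux_TT hT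
  have hEne : ∀ e ∈ E, e.Nonempty := fun e he => Finset.card_pos.1 (by rw [hE e he]; omega)
  haveI : Nonempty V := by
    obtain ⟨e, he⟩ := hne
    obtain ⟨x, -⟩ := hEne e he
    exact ⟨x⟩
  obtain ⟨N, hN, σ, hσ, hcov⟩ := hmw V E (by
    intro ι _ _ p
    obtain ⟨I, hI, hind⟩ := hFH V E hE hTT ι (fun i => {p i}) (hdens V E hE hw ι p)
    refine ⟨I, le_trans ?_ hI, hind⟩
    gcongr
    exact min_le_left _ _)
  haveI : Nonempty (Fin N) := ⟨⟨0, hN⟩⟩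
  obtain ⟨τ, hτ, hc⟩ := hK V E hEne (hsel V E hE hTT) (Fin N) σ hσ (by simpa using hcov)
  choose c hcτ using hc
  refine ⟨fun i => {v | c v = i}, fun v => ⟨c v, rfl, fun i hi => hi.symm⟩, fun i _ => ?_⟩
  refine aux_indep_mono ?_ (hτ i)
  intro v hv
  have hv' : c v = i := hv
  rw [← hv']
  exact hcτ v

/-- Property `δ_k(m)` implies property `T_k(t)` for some `t = t(k,m)`;
consequently the class `Δ_k(m)` is χ-bounded. -/
theorem Delta_km_chi_bounded (m k : ℕ) (hk : 2 ≤ k) (hkm : k ≤ m) :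
    (∃ t : ℕ, k ≤ t ∧ ∀ (V : Type u) [Fintype V] [DecidableEq V]
        (E : Finset (Finset V)), (∀ e ∈ E, e.card = k) → E.Nonempty →
        PropDelta E k m → PropT E k t) ∧
    (∃ f : ℕ → ℕ, ∀ (V : Type u) [Fintype V] [DecidableEq V]
        (E : Finset (Finset V)), (∀ e ∈ E, e.card = k) → E.Nonempty →
        PropDelta E k m → ∀ w : ℕ, CliqueNumLE E k w → ChromaticLE E (f w)) := by
  obtain ⟨t, hkt, hT⟩ := aux_T.{u} m k
  refine ⟨⟨t, hkt, fun V _ _ E hE _ hd => hT V E hE hd⟩, ?_⟩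
  choose f hf using fun w => aux_chi.{u} k t w hk hkt
  exact ⟨f, fun V _ _ E hE hne hd w hw => hf w V E hE hne (hT V E hE hd) hw⟩
end
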